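/- arXiv:2510.05009 — 2 statements merged into one kernel-verified Lean document; each statement's English description precedes it below -/
import Mathlib

section
/- Let q ∈ {0,…,n−1}, let ω be an open set in ℝⁿ, and let u : ω → [−∞,+∞) be upper semicontinuous. Then: (a) if u is real q-convex on ω and u is twice differentiable at a point p ∈ ω, then the real Hessian matrix of u at p has at most q negative eigenvalues (counted with multiplicity); (b) if u ∈ C¹_L(ω) for some L ≥ 0 and the real Hessian of u (which exists almost everywhere) has at most q negative eigenvalues at almost every point of ω, then u is real q-convex on ω. -/
open Metric Set Filter

noncomputable section

/-- An upper semicontinuous function `u : ω → [−∞,+∞)` (EReal-valued, never `⊤` on `ω`)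
is *real q-convex* on `ω` if it satisfies the local maximum property with respect to
affine linear functions on real `(q+1)`-dimensional affine subspaces. -/
def RealQConvexOn {E : Type*} [NormedAddCommGroup E] [NormedSpace ℝ E]
    (q : ℕ) (u : E → EReal) (ω : Set E) : Prop :=
  (∀ x ∈ ω, u x ≠ ⊤) ∧ UpperSemicontinuousOn u ω ∧
    ∀ P : AffineSubspace ℝ E, Module.finrank ℝ P.direction = q + 1 →
      ∀ (c : E) (r : ℝ), 0 < r → closure (Metric.ball c r) ⊆ ω →
        ∀ l : E →ᵃ[ℝ] ℝ,
          (∀ x ∈ Metric.sphere c r ∩ (P : Set E), u x ≤ (l x : EReal)) →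
          ∀ x ∈ Metric.closedBall c r ∩ (P : Set E), u x ≤ (l x : EReal)
/-- `g ∈ C¹_L(ω)`: the function `x ↦ g(x) + (L/2)‖x‖²` is locally convex on `ω`
(functions with lower bounded Hessian). -/
def MemC1L {E : Type*} [NormedAddCommGroup E] [NormedSpace ℝ E]
    (L : ℝ) (g : E → ℝ) (ω : Set E) : Prop :=
  ∀ x ∈ ω, ∃ U, IsOpen U ∧ x ∈ U ∧ U ⊆ ω ∧ Convex ℝ U ∧
    ConvexOn ℝ U fun y => g y + L / 2 * ‖y‖ ^ 2

/-- The supremum convolution `(u ∗ g)(x) = sup_y u(y)·g(x−y)` of two nonnegative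
functions defined on all of the space. -/
def supConv {E : Type*} [NormedAddCommGroup E] (u g : E → ℝ) (x : E) : ℝ :=
  ⨆ y : E, u y * g (x - y)
/-- The real Hessian matrix `(∂²u/∂x_k∂x_l (p))` of `u` at `p`. -/
def hessianMatrix {n : ℕ} (u : EuclideanSpace ℝ (Fin n) → ℝ)
    (p : EuclideanSpace ℝ (Fin n)) : Matrix (Fin n) (Fin n) ℝ :=
  Matrix.of fun k l =>
    iteratedFDeriv ℝ 2 u p ![EuclideanSpace.single k 1, EuclideanSpace.single l 1]

/-- A real symmetric matrix has at most `q` negative eigenvalues (with multiplicity). -/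
def NegEigAtMost {n : ℕ} (A : Matrix (Fin n) (Fin n) ℝ) (q : ℕ) : Prop :=
  ∃ hA : A.IsHermitian, Nat.card {i // hA.eigenvalues i < 0} ≤ q

/-- A real symmetric matrix has at most `q` nonpositive eigenvalues (with multiplicity). -/
def NonposEigAtMost {n : ℕ} (A : Matrix (Fin n) (Fin n) ℝ) (q : ℕ) : Prop :=
  ∃ hA : A.IsHermitian, Nat.card {i // hA.eigenvalues i ≤ 0} ≤ q

/-- `f` is twice differentiable at `p` (in the Peano sense) with derivative `l` and
(symmetric) second derivative `Q`: second-order Taylor expansion of order `o(‖h‖²)`. -/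
def HasSecondOrderExpansionAt {n : ℕ} (f : EuclideanSpace ℝ (Fin n) → ℝ)
    (p : EuclideanSpace ℝ (Fin n)) (l : EuclideanSpace ℝ (Fin n) →L[ℝ] ℝ)
    (Q : EuclideanSpace ℝ (Fin n) →L[ℝ] EuclideanSpace ℝ (Fin n) →L[ℝ] ℝ) : Prop :=
  (fun h => f (p + h) - f p - l h - (1 / 2 : ℝ) * Q h h) =o[nhds 0] fun h => ‖h‖ ^ 2

/-- The matrix of a continuous bilinear form in the standard basis of `ℝⁿ`. -/
def bilinMatrix {n : ℕ}
    (Q : EuclideanSpace ℝ (Fin n) →L[ℝ] EuclideanSpace ℝ (Fin n) →L[ℝ] ℝ) :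
    Matrix (Fin n) (Fin n) ℝ :=
  Matrix.of fun k l => Q (EuclideanSpace.single k 1) (EuclideanSpace.single l 1)

/-!
Part (a) tests the definition of real `q`-convexity on small balls: if the Hessian were negative
definite on a `(q + 1)`-dimensional space `V`, then on small spheres in `p + V` the function would
lie below its first-order expansion minus a positive constant, but not at `p`.

For (b), suppose that `u` exceeds an affine function `l` at a point `x` of a ball in a
`(q + 1)`-dimensional affine subspace with direction `V`, but nowhere on the bounding sphere.
Adding to `u - l` a small multiple of `‖y - x‖²` and subtracting a large multiple of the squared
distance of `y` to the subspace gives a function of `y` on the full ball with an interior local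
maximum. It is semiconvex, expressed here as `StrongConvexOn` with a negative modulus. After
subtracting a small multiple of the squared distance to the maximum point, one runs the argument of
Jensen's lemma. Every affine function of small slope touches the graph from above; at the contact
points its slope is the gradient, which is Lipschitz on the contact set with image containing a
ball, so the contact set has positive measure. At a density point where the gradient is
differentiable along the set, the function has a second-order expansion with nonpositive Hessian.
This replaces the Busemann–Feller–Alexandroff theorem and yields a point outside the exceptional
null set at which the Hessian of `u` is negative definite on `V`.
-/

open Topology

section PeanoExpansion

variable {E : Type*} [NormedAddCommGroup E] [NormedSpace ℝ E]
  {f g : E → ℝ} {p : E} {l m : E →L[ℝ] ℝ} {Q B : E →L[ℝ] E →L[ℝ] ℝ}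

/-- The remainder at `p + h` of the second-order Taylor expansion of `f` at `p` with candidate
derivatives `l` and `Q`. -/
def taylorRemainder (f : E → ℝ) (p : E) (l : E →L[ℝ] ℝ) (Q : E →L[ℝ] E →L[ℝ] ℝ) (h : E) : ℝ :=
  f (p + h) - f p - l h - (1 / 2 : ℝ) * Q h h

/-- The notion `HasSecondOrderExpansionAt` on any normed space: `f` is twice differentiable at `p`
in the sense of Peano, with derivatives `l` and `Q`. -/
def HasPeanoExpansionAt (f : E → ℝ) (p : E) (l : E →L[ℝ] ℝ) (Q : E →L[ℝ] E →L[ℝ] ℝ) : Prop :=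
  taylorRemainder f p l Q =o[𝓝 0] fun h => ‖h‖ ^ 2

namespace HasPeanoExpansionAt

lemma sub (hf : HasPeanoExpansionAt f p l Q) (hg : HasPeanoExpansionAt g p m B) :
    HasPeanoExpansionAt (f - g) p (l - m) (Q - B) := by
  refine (Asymptotics.IsLittleO.sub hf hg).congr_left fun h => ?_
  simp only [taylorRemainder, Pi.sub_apply, sub_apply]
  ring

lemma exists_symmetric (hf : HasPeanoExpansionAt f p l Q) :
    ∃ B, (∀ v w, B v w = B w v) ∧ (∀ v, B v v = Q v v) ∧ HasPeanoExpansionAt f p l B := by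
  let B : E →L[ℝ] E →L[ℝ] ℝ := (1 / 2 : ℝ) • (Q + Q.flip)
  have hB : ∀ v w, B v w = (Q v w + Q w v) / 2 := fun v w => by
    simp only [B, smul_apply, add_apply, ContinuousLinearMap.flip_apply, smul_eq_mul]
    ring
  have hself : ∀ v, B v v = Q v v := fun v => by rw [hB, add_self_div_two]
  refine ⟨B, fun v w => by rw [hB, hB, add_comm], hself, ?_⟩
  exact Asymptotics.IsLittleO.congr_left hf fun h => by simp only [taylorRemainder, hself]

lemma eventually_abs_le (hf : HasPeanoExpansionAt f p l Q) {c : ℝ} (hc : 0 < c) :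
    ∀ᶠ y in 𝓝 p, |f y - f p - l (y - p) - 1 / 2 * Q (y - p) (y - p)| ≤ c * ‖y - p‖ ^ 2 := by
  have hsub : Tendsto (fun y => y - p) (𝓝 p) (𝓝 0) := tendsto_sub_nhds_zero_iff.2 tendsto_id
  filter_upwards [hsub.eventually (Asymptotics.IsLittleO.def hf hc)] with y hy
  simpa [taylorRemainder] using hy

lemma apply_self_nonpos (hf : HasPeanoExpansionAt f p l Q)
    (hmax : ∀ᶠ y in 𝓝 p, f y ≤ f p + l (y - p)) (v : E) : Q v v ≤ 0 := by
  refine le_of_forall_pos_le_add fun c hc => ?_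
  have hline : Tendsto (fun t : ℝ => p + t • v) (𝓝[≠] 0) (𝓝 p) := by
    have hcont : Continuous fun t : ℝ => p + t • v := by fun_prop
    simpa using (hcont.tendsto 0).mono_left nhdsWithin_le_nhds
  have hc' : 0 < c / (2 * (‖v‖ ^ 2 + 1)) := by positivity
  obtain ⟨t, ⟨hexp, hle⟩, ht⟩ := ((hline.eventually ((hf.eventually_abs_le hc').and hmax)).and
    self_mem_nhdsWithin).exists
  have ht2 : 0 < t ^ 2 := sq_pos_of_ne_zero ht
  simp only [add_sub_cancel_left, map_smul, smul_apply, smul_eq_mul, norm_smul, mul_pow,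
    Real.norm_eq_abs, sq_abs] at hexp hle
  have hv : c / (2 * (‖v‖ ^ 2 + 1)) * ‖v‖ ^ 2 ≤ c / 2 := by
    rw [div_mul_eq_mul_div, div_le_div_iff₀ (by positivity) two_pos]
    nlinarith [sq_nonneg ‖v‖]
  refine le_of_mul_le_mul_left ?_ ht2
  nlinarith [(abs_le.1 hexp).1, mul_le_mul_of_nonneg_left hv ht2.le]

end HasPeanoExpansionAt

end PeanoExpansion

section QuadraticPolynomial

variable {E : Type*} [NormedAddCommGroup E] [NormedSpace ℝ E]
  {g : E → ℝ} {B : E →L[ℝ] E →L[ℝ] ℝ} {s : Set E} {m : ℝ}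

/-- The quadratic polynomial `y ↦ l(y) + ½ B(y - x, y - x)`, used to perturb functions. -/
def quadraticPolynomial (l : E →ᴬ[ℝ] ℝ) (B : E →L[ℝ] E →L[ℝ] ℝ) (x y : E) : ℝ :=
  l y + 1 / 2 * B (y - x) (y - x)

lemma continuous_quadraticPolynomial (l : E →ᴬ[ℝ] ℝ) (B : E →L[ℝ] E →L[ℝ] ℝ) (x : E) :
    Continuous (quadraticPolynomial l B x) := by
  unfold quadraticPolynomial
  fun_prop

lemma hasPeanoExpansionAt_quadraticPolynomial (l : E →ᴬ[ℝ] ℝ) (hB : ∀ v w, B v w = B w v)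
    (x p : E) : HasPeanoExpansionAt (quadraticPolynomial l B x) p (l.contLinear + B (p - x)) B := by
  refine (Asymptotics.isLittleO_zero _ _).congr_left fun h => ?_
  have hl : l (p + h) = l p + l.contLinear h := by
    simpa [add_comm] using l.map_vadd p h
  simp only [taylorRemainder, quadraticPolynomial, hl, add_sub_right_comm, map_add, add_apply,
    hB h (p - x)]
  ring

lemma strongConvexOn_quadraticPolynomial (l : E →ᴬ[ℝ] ℝ) (x : E)
    (hs : Convex ℝ s) (hB : ∀ v, m * ‖v‖ ^ 2 ≤ B v v) :
    StrongConvexOn s m (quadraticPolynomial l B x) := by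
  refine ⟨hs, fun y _ z _ a b ha hb hab => ?_⟩
  have hl : l (a • y + b • z) = a * l y + b * l z :=
    Convex.combo_affine_apply (f := l.toAffineMap) hab
  have hx : a • y + b • z - x = a • (y - x) + b • (z - x) := by
    rw [smul_sub, smul_sub, sub_add_sub_comm, ← add_smul, hab, one_smul]
  have hyz : m * ‖y - z‖ ^ 2 ≤ B ((y - x) - (z - x)) ((y - x) - (z - x)) := by
    simpa using hB (y - z)
  obtain rfl : b = 1 - a := by linarith
  simp only [quadraticPolynomial, hl, hx, map_add, map_sub, map_smul, add_apply, sub_apply,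
    smul_apply, smul_eq_mul] at hyz ⊢
  nlinarith [mul_le_mul_of_nonneg_left hyz (mul_nonneg ha hb)]

lemma strongConvexOn_add_quadraticPolynomial {k : ℝ} (hg : StrongConvexOn s m g)
    (l : E →ᴬ[ℝ] ℝ) (hB : ∀ v, k * ‖v‖ ^ 2 ≤ B v v) (x : E) :
    StrongConvexOn s (m + k) (g + quadraticPolynomial l B x) := by
  have hadd := UniformConvexOn.add hg (strongConvexOn_quadraticPolynomial l x hg.1 hB)
  rwa [show (fun r : ℝ => m / 2 * r ^ 2) + (fun r => k / 2 * r ^ 2) = fun r => (m + k) / 2 * r ^ 2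
    by ext r; simp only [Pi.add_apply]; ring] at hadd

lemma strongConvexOn_subset {t : Set E} (hg : StrongConvexOn s m g) (hts : t ⊆ s)
    (ht : Convex ℝ t) : StrongConvexOn t m g :=
  ⟨ht, fun _ hy _ hz => hg.2 (hts hy) (hts hz)⟩

lemma continuousOn_interior_of_strongConvexOn {F : Type*} [NormedAddCommGroup F]
    [InnerProductSpace ℝ F] [FiniteDimensional ℝ F] {t : Set F} {f : F → ℝ}
    (hf : StrongConvexOn t m f) : ContinuousOn f (interior t) := by
  have hconv := (strongConvexOn_iff_convex.1 hf).continuousOn_interior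
  exact (hconv.add (g := fun y => m / 2 * ‖y‖ ^ 2) (by fun_prop)).congr fun y _ =>
    (sub_add_cancel _ _).symm

end QuadraticPolynomial

section NegativeIndex

/-- The quadratic form `v ↦ Q v v`, whose negative signature `sigNeg` counts the negative
eigenvalues of `Q` without choosing a basis. -/
def hessianForm {E : Type*} [NormedAddCommGroup E] [NormedSpace ℝ E] (Q : E →L[ℝ] E →L[ℝ] ℝ) :
    QuadraticForm ℝ E :=
  LinearMap.BilinMap.toQuadraticMap Q.toLinearMap₁₂

lemma hessianForm_apply {E : Type*} [NormedAddCommGroup E] [NormedSpace ℝ E]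
    (Q : E →L[ℝ] E →L[ℝ] ℝ) (v : E) : hessianForm Q v = Q v v :=
  rfl

lemma sigNeg_le_iff_forall_exists_nonneg {M : Type*} [AddCommGroup M] [Module ℝ M]
    [FiniteDimensional ℝ M] (Φ : QuadraticForm ℝ M) (q : ℕ) :
    sigNeg Φ ≤ q ↔
      ∀ V : Submodule ℝ M, Module.finrank ℝ V = q + 1 → ∃ v ∈ V, v ≠ 0 ∧ 0 ≤ Φ v := by
  refine ⟨fun hΦ V hV => ?_, fun hΦ => ?_⟩
  · by_contra! hneg
    have hdef : ((-Φ).restrict V).PosDef := fun v hv => by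
      simpa using hneg v v.2 (by simpa using hv)
    have := le_sigNeg_of_negDef Φ hdef
    omega
  · obtain ⟨V, hV, hdef⟩ := exists_finrank_eq_sigNeg_and_negDef Φ
    by_contra! hq
    obtain ⟨b, hb⟩ := exists_linearIndependent_of_le_finrank (R := ℝ) (M := V) (hV ▸ hq)
    obtain ⟨v, hv, hv0, hnonneg⟩ := hΦ ((Submodule.span ℝ (range b)).map V.subtype) (by
      rw [Submodule.finrank_map_subtype_eq, finrank_span_eq_card hb, Fintype.card_fin])
    obtain ⟨w, -, rfl⟩ := hv
    have hneg : Φ w < 0 := by simpa using hdef w (by simpa using hv0)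
    exact absurd hnonneg hneg.not_ge

section EuclideanSpace

variable {n : ℕ} {Q : EuclideanSpace ℝ (Fin n) →L[ℝ] EuclideanSpace ℝ (Fin n) →L[ℝ] ℝ}

lemma apply_eq_dotProduct_bilinMatrix (Q) (x y : EuclideanSpace ℝ (Fin n)) :
    Q x y = x.ofLp ⬝ᵥ (bilinMatrix Q).mulVec y.ofLp := by
  conv_lhs =>
    rw [← (EuclideanSpace.basisFun (Fin n) ℝ).sum_repr x,
      ← (EuclideanSpace.basisFun (Fin n) ℝ).sum_repr y]
  simp only [EuclideanSpace.basisFun_repr, EuclideanSpace.basisFun_apply, map_sum, map_smul,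
    sum_apply, smul_apply, dotProduct, Matrix.mulVec, bilinMatrix, Matrix.of_apply, smul_eq_mul,
    Finset.mul_sum]
  rw [Finset.sum_comm]
  exact Finset.sum_congr rfl fun i _ => Finset.sum_congr rfl fun j _ => by ring

lemma isHermitian_bilinMatrix_iff : (bilinMatrix Q).IsHermitian ↔ ∀ v w, Q v w = Q w v := by
  refine ⟨fun hQ v w => ?_, fun hQ => Matrix.IsHermitian.ext fun i j => hQ _ _⟩
  rw [apply_eq_dotProduct_bilinMatrix, Matrix.dotProduct_mulVec, ← Matrix.mulVec_transpose,
    dotProduct_comm, apply_eq_dotProduct_bilinMatrix,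
    ← Matrix.conjTranspose_eq_transpose_of_trivial, hQ.eq]

lemma apply_eigenvectorBasis (hQ : (bilinMatrix Q).IsHermitian) (i j : Fin n) :
    Q (hQ.eigenvectorBasis i) (hQ.eigenvectorBasis j) = if i = j then hQ.eigenvalues i else 0 := by
  rw [apply_eq_dotProduct_bilinMatrix, hQ.mulVec_eigenvectorBasis, dotProduct_smul]
  have := orthonormal_iff_ite.1 hQ.eigenvectorBasis.orthonormal j i
  rw [EuclideanSpace.inner_eq_star_dotProduct, star_trivial] at this
  rw [this]
  grind [smul_eq_mul]

lemma sigNeg_hessianForm_eq_card (hQ : (bilinMatrix Q).IsHermitian) :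
    sigNeg (hessianForm Q) = Nat.card {i // hQ.eigenvalues i < 0} := by
  let b := hQ.eigenvectorBasis.toBasis
  have hortho : (QuadraticMap.associated (R := ℝ) (hessianForm Q)).IsOrthoᵢ b := by
    refine LinearMap.isOrthoᵢ_def.2 fun i j hij => ?_
    rw [hessianForm, QuadraticMap.associated_toQuadraticMap]
    simp [b, apply_eigenvectorBasis hQ, hij, hij.symm]
  have hdiag := QuadraticForm.sigNeg_of_equiv_weightedSumSquares
    ⟨QuadraticMap.basisRepr_eq_of_iIsOrtho _ b hortho ▸ (hessianForm Q).isometryEquivBasisRepr b⟩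
  rw [hdiag, ← Nat.card_coe_set_eq]
  simp only [b, OrthonormalBasis.coe_toBasis, hessianForm_apply, apply_eigenvectorBasis hQ,
    if_true, coe_ofPred]

lemma negEigAtMost_bilinMatrix_iff {q : ℕ} :
    NegEigAtMost (bilinMatrix Q) q ↔ (∀ v w, Q v w = Q w v) ∧ sigNeg (hessianForm Q) ≤ q := by
  rw [← isHermitian_bilinMatrix_iff, ← exists_prop]
  exact exists_congr fun hQ => by rw [sigNeg_hessianForm_eq_card hQ]

end EuclideanSpace

end NegativeIndex

section NecessaryCondition

variable {E : Type*} [NormedAddCommGroup E] [NormedSpace ℝ E]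

lemma exists_pos_forall_apply_self_le (Q : E →L[ℝ] E →L[ℝ] ℝ) (V : Submodule ℝ E)
    [FiniteDimensional ℝ V] (hQ : ∀ v ∈ V, v ≠ 0 → Q v v < 0) :
    ∃ ε > 0, ∀ v ∈ V, Q v v ≤ -ε * ‖v‖ ^ 2 := by
  obtain ⟨ε, hε, hsphere⟩ := (isCompact_sphere (0 : V) 1).exists_forall_le'
    (f := fun v : V => -Q v v) (a := 0) (by fun_prop)
    fun v hv => neg_pos.2 (hQ v v.2 (by simpa using ne_zero_of_mem_unit_sphere ⟨v, hv⟩))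
  refine ⟨ε, hε, fun v hv => ?_⟩
  rcases eq_or_ne v 0 with rfl | hv0
  · simp
  have hnorm : 0 < ‖v‖ := norm_pos_iff.2 hv0
  have hunit := hsphere (‖v‖⁻¹ • ⟨v, hv⟩) (by simp [norm_smul, hnorm.ne'])
  simp only [Submodule.coe_smul, map_smul, smul_apply, smul_eq_mul] at hunit
  have hscale : ‖v‖⁻¹ * (‖v‖⁻¹ * Q v v) * ‖v‖ ^ 2 = Q v v := by field_simp
  nlinarith [mul_le_mul_of_nonneg_right hunit (sq_nonneg ‖v‖)]

theorem RealQConvexOn.exists_nonneg_of_hasPeanoExpansionAt {q : ℕ} {ω : Set E} {u : E → EReal}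
    {p : E} {f : E → ℝ} {l : E →L[ℝ] ℝ} {Q : E →L[ℝ] E →L[ℝ] ℝ} (hu : RealQConvexOn q u ω)
    (hω : ω ∈ 𝓝 p) (huf : ∀ᶠ x in 𝓝 p, u x = f x) (hf : HasPeanoExpansionAt f p l Q)
    {V : Submodule ℝ E} (hV : Module.finrank ℝ V = q + 1) : ∃ v ∈ V, v ≠ 0 ∧ 0 ≤ Q v v := by
  by_contra! hneg
  have : FiniteDimensional ℝ V := Module.finite_of_finrank_eq_succ hV
  obtain ⟨ε, hε, hQ⟩ := exists_pos_forall_apply_self_le Q V hneg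
  obtain ⟨r, hr, hball⟩ := nhds_basis_closedBall.mem_iff.1
    ((huf.and (hf.eventually_abs_le (show 0 < ε / 8 by positivity))).and hω)
  let a : E →ᵃ[ℝ] ℝ := (l : E →ₗ[ℝ] ℝ).toAffineMap
    + AffineMap.const ℝ E (f p - l p - ε / 4 * r ^ 2)
  have ha : ∀ x, a x = f p + l (x - p) - ε / 4 * r ^ 2 := fun x => by
    simp [a]; ring
  have hp : p ∈ closedBall p r := mem_closedBall_self hr.le
  have hle : u p ≤ a p := by
    refine hu.2.2 (AffineSubspace.mk' p V) (by rwa [AffineSubspace.direction_mk']) p r hr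
      (closure_ball_subset_closedBall.trans fun x hx => (hball hx).2) a ?_ p
      ⟨hp, AffineSubspace.self_mem_mk' _ _⟩
    rintro x ⟨hx, hxV⟩
    obtain ⟨⟨hux, hexp⟩, -⟩ := hball (sphere_subset_closedBall hx)
    have hQx := hQ (x - p) (by simpa using hxV)
    rw [mem_sphere_iff_norm.1 hx] at hQx hexp
    rw [hux, EReal.coe_le_coe_iff, ha]
    linarith [(abs_le.1 hexp).2, show 0 < ε * r ^ 2 by positivity]
  rw [(hball hp).1.1, EReal.coe_le_coe_iff, ha, sub_self, map_zero] at hle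
  linarith [show 0 < ε * r ^ 2 by positivity]

end NecessaryCondition

section QuadraticRemainder

variable {E : Type*} [NormedAddCommGroup E] [NormedSpace ℝ E]
  {g : E → ℝ} {B : Set E} {C r : ℝ} {x y z : E} {p p' : E →L[ℝ] ℝ}

/-- `p` is a supergradient of `g` at `y` relative to `B`: the affine function with slope `p`
through `(y, g y)` lies above `g` on `B`. -/
def IsSupergradientOn (g : E → ℝ) (B : Set E) (y : E) (p : E →L[ℝ] ℝ) : Prop :=
  ∀ w ∈ B, g w ≤ g y + p (w - y)

/-- On all of `B`, and not only near `y`, the first-order expansion of `g` at `y` with slope `p`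
has error at most `C ‖w - y‖²`. -/
def HasQuadraticRemainderOn (g : E → ℝ) (B : Set E) (C : ℝ) (y : E) (p : E →L[ℝ] ℝ) : Prop :=
  ∀ w ∈ B, |g w - g y - p (w - y)| ≤ C * ‖w - y‖ ^ 2

lemma IsSupergradientOn.sub_le_of_sub_smul_mem {M s : ℝ} {e : E} (hp : IsSupergradientOn g B y p)
    (hg : StrongConvexOn B (-M) g) (he : y + e ∈ B) (hs : 0 < s) (hse : y - s • e ∈ B) :
    p e - (1 + s) * (M / 2 * ‖e‖ ^ 2) ≤ g (y + e) - g y := by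
  obtain ⟨-, hconv⟩ := hg
  specialize hconv hse he (a := 1 / (1 + s)) (b := s / (1 + s)) (by positivity) (by positivity)
    (by field_simp)
  have hy : (1 / (1 + s)) • (y - s • e) + (s / (1 + s)) • (y + e) = y := by
    match_scalars
    · field_simp
    · field_simp
      ring
  have hdist : y - s • e - (y + e) = -((1 + s) • e) := by module
  rw [hy, hdist, norm_neg, norm_smul, Real.norm_of_nonneg (by positivity)] at hconv
  have hsup := hp _ hse
  rw [sub_sub_cancel_left, map_neg, map_smul] at hsup
  simp only [smul_eq_mul] at hconv hsup
  have hcomb : (1 + s) * g y ≤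
      g (y - s • e) + s * g (y + e) + s * ((1 + s) * (M / 2 * ‖e‖ ^ 2)) := by
    refine (mul_le_mul_of_nonneg_left hconv (by positivity : 0 ≤ 1 + s)).trans_eq ?_
    field_simp
    ring
  refine le_of_mul_le_mul_left ?_ hs
  linarith

lemma IsSupergradientOn.sub_le {M : ℝ} (hp : IsSupergradientOn g B y p)
    (hg : StrongConvexOn B (-M) g) (hB : B ∈ 𝓝 y) {w : E} (hw : w ∈ B) :
    p (w - y) - M / 2 * ‖w - y‖ ^ 2 ≤ g w - g y := by
  obtain ⟨e, rfl⟩ : ∃ e, w = y + e := ⟨w - y, by abel⟩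
  rw [add_sub_cancel_left]
  have hlim : Tendsto (fun s : ℝ => p e - (1 + s) * (M / 2 * ‖e‖ ^ 2)) (𝓝[>] 0)
      (𝓝 (p e - M / 2 * ‖e‖ ^ 2)) := by
    have hcont : Continuous fun s : ℝ => p e - (1 + s) * (M / 2 * ‖e‖ ^ 2) := by fun_prop
    exact (hcont.tendsto' 0 _ (by simp)).mono_left nhdsWithin_le_nhds
  have hmem : ∀ᶠ s : ℝ in 𝓝[>] 0, y - s • e ∈ B := by
    have hcont : Continuous fun s : ℝ => y - s • e := by fun_prop
    exact (hcont.tendsto' 0 y (by simp)).mono_left nhdsWithin_le_nhds hB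
  refine le_of_tendsto hlim ?_
  filter_upwards [hmem, self_mem_nhdsWithin] with s hse hs
  exact hp.sub_le_of_sub_smul_mem hg hw hs hse

lemma IsSupergradientOn.hasQuadraticRemainderOn {M : ℝ} (hp : IsSupergradientOn g B y p)
    (hg : StrongConvexOn B (-M) g) (hM : 0 ≤ M) (hB : B ∈ 𝓝 y) :
    HasQuadraticRemainderOn g B (M / 2) y p := fun w hw => by
  have hpos : 0 ≤ M / 2 * ‖w - y‖ ^ 2 := by positivity
  rw [abs_le]
  constructor <;> linarith [hp w hw, hp.sub_le hg hB hw]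

namespace HasQuadraticRemainderOn

lemma hasFDerivAt (hp : HasQuadraticRemainderOn g B C y p) (hB : B ∈ 𝓝 y) :
    HasFDerivAt g p y := by
  have hO : (fun w => g w - g y - p (w - y)) =O[𝓝 y] fun w => ‖w - y‖ ^ 2 := by
    refine .of_bound C ?_
    filter_upwards [hB] with w hw
    simpa using hp w hw
  exact .of_isLittleO (hO.trans_isLittleO (Asymptotics.isLittleO_pow_sub_sub y one_lt_two))

lemma abs_sub_apply_le (hp : HasQuadraticRemainderOn g B C y p)
    (hp' : HasQuadraticRemainderOn g B C z p') (hC : 0 ≤ C) (hz : z ∈ B) {e : E}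
    (hze : z + e ∈ B) (he : ‖e‖ = ‖y - z‖) : |(p - p') e| ≤ 6 * C * ‖y - z‖ * ‖e‖ := by
  have hzy : ‖z - y‖ = ‖e‖ := by rw [he, norm_sub_rev]
  have hsum : z + e - y = (z - y) + e := by abel
  have hsq : ‖z + e - y‖ ^ 2 ≤ (2 * ‖e‖) ^ 2 := by
    gcongr
    rw [hsum]
    linarith [norm_add_le (z - y) e]
  have h₁ := abs_le.1 ((hp _ hze).trans (mul_le_mul_of_nonneg_left hsq hC))
  have h₂ := abs_le.1 (hp _ hz)
  have h₃ := abs_le.1 (hp' _ hze)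
  rw [hsum, map_add] at h₁
  rw [hzy] at h₂
  rw [add_sub_cancel_left] at h₃
  rw [← he, sub_apply, abs_le]
  constructor <;> linarith

lemma norm_sub_le (hp : HasQuadraticRemainderOn g (closedBall x (3 * r)) C y p)
    (hp' : HasQuadraticRemainderOn g (closedBall x (3 * r)) C z p') (hC : 0 ≤ C)
    (hy : y ∈ closedBall x r) (hz : z ∈ closedBall x r) (hyz : y ≠ z) :
    ‖p - p'‖ ≤ 6 * C * ‖y - z‖ := by
  have hdist : 0 < ‖y - z‖ := norm_pos_iff.2 (sub_ne_zero.2 hyz)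
  have hle : ‖y - z‖ ≤ 2 * r := by
    rw [← dist_eq_norm]
    linarith [dist_triangle_right y z x, mem_closedBall.1 hy, mem_closedBall.1 hz]
  refine ContinuousLinearMap.opNorm_le_of_unit_norm (by positivity) fun e he => ?_
  have hne : ‖‖y - z‖ • e‖ = ‖y - z‖ := by rw [norm_smul, norm_norm, he, mul_one]
  have hze : z + ‖y - z‖ • e ∈ closedBall x (3 * r) := by
    rw [mem_closedBall_iff_norm, add_sub_right_comm]
    linarith [norm_add_le (z - x) (‖y - z‖ • e), mem_closedBall_iff_norm.1 hz]
  have hz' : z ∈ closedBall x (3 * r) := closedBall_subset_closedBall (by linarith) hz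
  have key := hp.abs_sub_apply_le hp' hC hz' hze hne
  rw [hne, map_smul, smul_eq_mul, abs_mul, abs_norm, mul_comm] at key
  exact le_of_mul_le_mul_right key hdist

end HasQuadraticRemainderOn

lemma IsSupergradientOn.fderiv_eq {M : ℝ} (hp : IsSupergradientOn g B y p)
    (hg : StrongConvexOn B (-M) g) (hM : 0 ≤ M) (hB : B ∈ 𝓝 y) : fderiv ℝ g y = p :=
  ((hp.hasQuadraticRemainderOn hg hM hB).hasFDerivAt hB).fderiv

end QuadraticRemainder

section UpperContactSet

variable {E : Type*} [NormedAddCommGroup E] [NormedSpace ℝ E]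
  {g : E → ℝ} {B : Set E} {M r η : ℝ} {x y : E} {p : E →L[ℝ] ℝ}

lemma exists_isSupergradientOn (hB : IsCompact B) (hg : ContinuousOn g B) (hx : x ∈ B)
    (hmax : ∀ w ∈ B, g w ≤ g x - η * ‖w - x‖ ^ 2) (hη : 0 < η) (hr : 0 ≤ r) (hp : ‖p‖ ≤ η * r) :
    ∃ y ∈ B ∩ closedBall x r, IsSupergradientOn g B y p := by
  obtain ⟨y, hy, hymax⟩ := hB.exists_isMaxOn ⟨x, hx⟩ (hg.sub p.continuous.continuousOn)
  have hle : ∀ w ∈ B, g w - p w ≤ g y - p y := fun w hw => hymax hw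
  refine ⟨y, ⟨hy, ?_⟩, fun w hw => by rw [map_sub]; linarith [hle w hw]⟩
  rw [mem_closedBall_iff_norm]
  by_contra! hlt
  have hpx : p x - p y ≤ η * r * ‖y - x‖ := by
    rw [← map_sub, norm_sub_rev]
    exact (le_abs_self _).trans (p.le_of_opNorm_le hp _)
  nlinarith [hle x hx, hmax y hy, mul_pos hη (sub_pos.2 hlt), hr.trans_lt hlt]

/-- The points of `closedBall x r` at which `g` is touched from above by an affine function over
the larger ball `closedBall x (3 * r)`. The factor `3` makes room for the points `z + e` with
`z ∈ closedBall x r` and `‖e‖` at most the diameter `2 * r`. -/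
def upperContactSet (g : E → ℝ) (x : E) (r : ℝ) : Set E :=
  {y ∈ closedBall x r | ∃ p, IsSupergradientOn g (closedBall x (3 * r)) y p}

omit [NormedSpace ℝ E] in
lemma closedBall_three_mul_mem_nhds (hr : 0 < r) (hy : y ∈ closedBall x r) :
    closedBall x (3 * r) ∈ 𝓝 y :=
  closedBall_mem_nhds_of_mem (closedBall_subset_ball (by linarith) hy)

lemma isSupergradientOn_fderiv (hg : StrongConvexOn (closedBall x (3 * r)) (-M) g)
    (hM : 0 ≤ M) (hr : 0 < r) (hy : y ∈ upperContactSet g x r) :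
    IsSupergradientOn g (closedBall x (3 * r)) y (fderiv ℝ g y) := by
  obtain ⟨hyr, p, hp⟩ := hy
  rwa [hp.fderiv_eq hg hM (closedBall_three_mul_mem_nhds hr hyr)]

lemma hasQuadraticRemainderOn_fderiv (hg : StrongConvexOn (closedBall x (3 * r)) (-M) g)
    (hM : 0 ≤ M) (hr : 0 < r) (hy : y ∈ upperContactSet g x r) :
    HasQuadraticRemainderOn g (closedBall x (3 * r)) (M / 2) y (fderiv ℝ g y) :=
  (isSupergradientOn_fderiv hg hM hr hy).hasQuadraticRemainderOn hg hM
    (closedBall_three_mul_mem_nhds hr hy.1)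

lemma lipschitzOnWith_fderiv (hg : StrongConvexOn (closedBall x (3 * r)) (-M) g)
    (hM : 0 ≤ M) (hr : 0 < r) :
    LipschitzOnWith (3 * M).toNNReal (fderiv ℝ g) (upperContactSet g x r) := by
  refine .of_dist_le_mul fun y hy z hz => ?_
  rcases eq_or_ne y z with rfl | hyz
  · simp
  rw [dist_eq_norm, dist_eq_norm, Real.coe_toNNReal _ (by positivity)]
  refine ((hasQuadraticRemainderOn_fderiv hg hM hr hy).norm_sub_le
    (hasQuadraticRemainderOn_fderiv hg hM hr hz) (by positivity) hy.1 hz.1 hyz).trans_eq ?_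
  ring

lemma ball_subset_fderiv_image_upperContactSet [ProperSpace E]
    (hg : StrongConvexOn (closedBall x (3 * r)) (-M) g)
    (hcont : ContinuousOn g (closedBall x (3 * r)))
    (hmax : ∀ w ∈ closedBall x (3 * r), g w ≤ g x - η * ‖w - x‖ ^ 2)
    (hM : 0 ≤ M) (hr : 0 < r) (hη : 0 < η) :
    ball 0 (η * r) ⊆ fderiv ℝ g '' upperContactSet g x r := by
  intro p hp
  obtain ⟨y, ⟨-, hy⟩, hyp⟩ := exists_isSupergradientOn (isCompact_closedBall x (3 * r)) hcont
    (mem_closedBall_self (by positivity)) hmax hη hr.le (mem_ball_zero_iff.1 hp).le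
  exact ⟨y, ⟨hy, p, hyp⟩, hyp.fderiv_eq hg hM (closedBall_three_mul_mem_nhds hr hy)⟩

end UpperContactSet

open MeasureTheory Module

section Nonporous

/-- `K` is not porous at `x`: near `x`, every ball `closedBall y (ε * dist y x)` meets `K`. -/
def IsNonporousAt {X : Type*} [PseudoMetricSpace X] (K : Set X) (x : X) : Prop :=
  ∀ ε > 0, ∀ᶠ y in 𝓝 x, ∃ z ∈ K, dist y z ≤ ε * dist y x

variable {E : Type*} [NormedAddCommGroup E] [NormedSpace ℝ E] [FiniteDimensional ℝ E]
  [MeasurableSpace E] [BorelSpace E]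

lemma measure_inter_closedBall_div_add_le (μ : Measure E) [μ.IsAddHaarMeasure] {K : Set E}
    {x y : E} {s t : ℝ} (hs : 0 < s) (ht : 0 < t) (hxy : dist y x + t * s ≤ s)
    (hK : Disjoint K (closedBall y (t * s))) :
    μ (K ∩ closedBall x s) / μ (closedBall x s) + ENNReal.ofReal (t ^ finrank ℝ E) ≤ 1 := by
  have hsub : K ∩ closedBall x s ∪ closedBall y (t * s) ⊆ closedBall x s :=
    union_subset inter_subset_right (closedBall_subset_closedBall' (by linarith))
  have hle := measure_mono (μ := μ) hsub
  have hpos : μ (closedBall x s) ≠ 0 := (measure_closedBall_pos μ x hs).ne'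
  have htop : μ (closedBall x s) ≠ ⊤ := measure_closedBall_lt_top.ne
  rw [measure_union (hK.mono_left inter_subset_left) measurableSet_closedBall,
    Measure.addHaar_closedBall_mul_of_pos μ y ht, ← Measure.addHaar_closedBall_center μ x] at hle
  rw [← ENNReal.mul_div_cancel_right hpos htop (a := ENNReal.ofReal _), ← ENNReal.add_div]
  exact ENNReal.div_le_of_le_mul (by rwa [one_mul])

lemma isNonporousAt_of_tendsto_measure_inter_div (μ : Measure E) [μ.IsAddHaarMeasure]
    {K : Set E} {x : E} (hx : x ∈ K)
    (hK : Tendsto (fun r => μ (K ∩ closedBall x r) / μ (closedBall x r)) (𝓝[>] 0) (𝓝 1)) :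
    IsNonporousAt K x := by
  intro ε hε
  have hradius : Tendsto (fun y => (1 + ε) * dist y x) (𝓝[≠] x) (𝓝[>] 0) := by
    have hcont : Continuous fun y => (1 + ε) * dist y x := by fun_prop
    refine tendsto_nhdsWithin_iff.2
      ⟨(hcont.tendsto' x 0 (by simp)).mono_left nhdsWithin_le_nhds, ?_⟩
    filter_upwards [self_mem_nhdsWithin] with y hy
    exact mul_pos (by positivity) (dist_pos.2 hy)
  have hc : 0 < ENNReal.ofReal ((ε / (1 + ε)) ^ finrank ℝ E) := by
    rw [ENNReal.ofReal_pos]; positivity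
  have hdense := (hK.comp hradius).eventually
    (lt_mem_nhds (ENNReal.sub_lt_self ENNReal.one_ne_top one_ne_zero hc.ne'))
  filter_upwards [eventually_nhdsWithin_iff.1 hdense] with y hy
  rcases eq_or_ne y x with rfl | hyx
  · exact ⟨y, hx, by simp⟩
  by_contra! hfar
  have hd : 0 < dist y x := dist_pos.2 hyx
  have hscale : ε / (1 + ε) * ((1 + ε) * dist y x) = ε * dist y x := by field_simp
  have hdisj : Disjoint K (closedBall y (ε * dist y x)) :=
    Set.disjoint_left.2 fun z hz hzy => (hfar z hz).not_ge (mem_closedBall'.1 hzy)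
  have hle := measure_inter_closedBall_div_add_le μ (K := K) (x := x) (y := y)
    (s := (1 + ε) * dist y x) (t := ε / (1 + ε)) (by positivity) (by positivity)
    (by rw [hscale]; linarith) (by rwa [hscale])
  exact (hy hyx).not_ge (ENNReal.le_sub_of_add_le_right ENNReal.ofReal_ne_top hle)

end Nonporous

section LipschitzMaps

variable {E F : Type*} [NormedAddCommGroup E] [NormedSpace ℝ E] [FiniteDimensional ℝ E]
  [MeasurableSpace E] [BorelSpace E] [NormedAddCommGroup F] [NormedSpace ℝ F]
  [FiniteDimensional ℝ F]

lemma addHaar_image_eq_zero_of_lipschitzOnWith [MeasurableSpace F] [BorelSpace F]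
    (μ : Measure E) [μ.IsAddHaarMeasure] (ν : Measure F) [ν.IsAddHaarMeasure]
    (hfin : finrank ℝ F = finrank ℝ E) {C : NNReal} {f : E → F} {s : Set E}
    (hf : LipschitzOnWith C f s) (hs : μ s = 0) : ν (f '' s) = 0 := by
  have hzero : μH[finrank ℝ E] s = 0 := Measure.absolutelyContinuous_isAddHaarMeasure _ μ hs
  have himage := hf.hausdorffMeasure_image_le (d := finrank ℝ E) (by positivity)
  rw [hzero, mul_zero, nonpos_iff_eq_zero, ← hfin] at himage
  exact Measure.absolutelyContinuous_isAddHaarMeasure ν _ himage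

lemma exists_differentiableWithinAt_isNonporousAt (μ : Measure E)
    [μ.IsAddHaarMeasure] {C : NNReal} {f : E → F} {K S : Set E} (hf : LipschitzOnWith C f K)
    (hK : μ K ≠ 0) (hS : μ S = 0) :
    ∃ y ∈ K, y ∉ S ∧ DifferentiableWithinAt ℝ f K y ∧ IsNonporousAt K y := by
  obtain ⟨y, hyK, hyS, hdiff, hdens⟩ := Measure.exists_mem_of_measure_ne_zero_of_ae hK
    ((ae_restrict_of_ae (measure_eq_zero_iff_ae_notMem.1 hS)).and
      ((ae_restrict_of_ae (hf.ae_differentiableWithinAt_of_mem (μ := μ))).and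
        (Besicovitch.ae_tendsto_measure_inter_div μ K)))
  exact ⟨y, hyK, hyS, hdiff hyK, isNonporousAt_of_tendsto_measure_inter_div μ hyK hdens⟩

end LipschitzMaps

section ExpansionAtNonporousPoint

variable {E F : Type*} [NormedAddCommGroup E] [NormedSpace ℝ E] [NormedAddCommGroup F]
  [NormedSpace ℝ F] {K B : Set E} {x : E}

lemma IsNonporousAt.eventually_exists_norm_sub_le {G : E → F} {A : E →L[ℝ] F}
    (hK : IsNonporousAt K x) (hG : HasFDerivWithinAt G A K x) {δ : ℝ} (hδ : 0 < δ) :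
    ∀ᶠ y in 𝓝 x, ∃ z ∈ K,
      ‖y - z‖ ≤ δ * ‖y - x‖ ∧ ‖G z - G x - A (z - x)‖ ≤ δ * ‖y - x‖ := by
  have hder := (hasFDerivWithinAt_iff_isLittleO.1 hG).def (show 0 < δ / (1 + δ) by positivity)
  rw [eventually_nhdsWithin_iff] at hder
  obtain ⟨r, hr, hball⟩ := Metric.eventually_nhds_iff.1 hder
  have hnear : ∀ᶠ y in 𝓝 x, (1 + δ) * dist y x < r := by
    have hcont : Continuous fun y => (1 + δ) * dist y x := by fun_prop
    exact (hcont.tendsto' x 0 (by simp)).eventually (gt_mem_nhds hr)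
  filter_upwards [hK δ hδ, hnear] with y ⟨z, hz, hyz⟩ hyr
  have hzx : dist z x ≤ (1 + δ) * dist y x := by
    linarith [dist_triangle_left z x y]
  refine ⟨z, hz, by simpa only [dist_eq_norm] using hyz, ?_⟩
  calc ‖G z - G x - A (z - x)‖ ≤ δ / (1 + δ) * ‖z - x‖ := hball (hzx.trans_lt hyr) hz
    _ ≤ δ / (1 + δ) * ((1 + δ) * ‖y - x‖) := by
      simp only [dist_eq_norm] at hzx
      gcongr
    _ = δ * ‖y - x‖ := by field_simp

variable {g : E → ℝ} {C : ℝ} {p : E →L[ℝ] ℝ} {A : E →L[ℝ] E →L[ℝ] ℝ}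

lemma HasQuadraticRemainderOn.abs_taylorRemainder_sub_le {z h : E} {P : E →L[ℝ] ℝ} {s t : ℝ}
    (hP : HasQuadraticRemainderOn g B C z P) (hC : 0 ≤ C) (hs : 0 ≤ s)
    (ht : x + t • h ∈ B) (hst : x + (t + s) • h ∈ B) (hz : ‖x + t • h - z‖ ≤ s * ‖h‖)
    (hPz : ‖P - p - A (z - x)‖ ≤ s * ‖h‖) :
    |taylorRemainder g x p A ((t + s) • h) - taylorRemainder g x p A (t • h)| ≤
      (5 * C + 1 + 2 * ‖A‖) * (s * ‖h‖) ^ 2 := by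
  set e := x + t • h - z
  have hw : x + (t + s) • h - z = e + s • h := by simp only [e]; module
  have hsh : ‖s • h‖ = s * ‖h‖ := by rw [norm_smul, Real.norm_of_nonneg hs]
  have hnear : |g (x + t • h) - g z - P e| ≤ C * (s * ‖h‖) ^ 2 :=
    (hP _ ht).trans (by gcongr)
  have hfar : |g (x + (t + s) • h) - g z - P (e + s • h)| ≤ C * (2 * (s * ‖h‖)) ^ 2 := by
    refine hw ▸ (hP _ hst).trans ?_
    rw [hw]
    gcongr
    linarith [norm_add_le e (s • h)]
  have hslope : |(P - p - A (z - x)) (s • h)| ≤ s * ‖h‖ * (s * ‖h‖) := by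
    simpa only [hsh, Real.norm_eq_abs] using (P - p - A (z - x)).le_of_opNorm_le hPz (s • h)
  have hshift : |A e (s • h)| ≤ ‖A‖ * (s * ‖h‖) * (s * ‖h‖) :=
    (A.le_opNorm₂ e (s • h)).trans (by rw [hsh]; gcongr)
  have hquad : |A (s • h) (s • h)| ≤ ‖A‖ * (s * ‖h‖) * (s * ‖h‖) :=
    hsh ▸ A.le_opNorm₂ (s • h) (s • h)
  have hzx : z - x = t • h - e := by simp only [e]; abel
  have hsplit : taylorRemainder g x p A ((t + s) • h) - taylorRemainder g x p A (t • h) =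
      (g (x + (t + s) • h) - g z - P (e + s • h)) - (g (x + t • h) - g z - P e)
        + (P - p - A (z - x)) (s • h) - A e (s • h) - 1 / 2 * A (s • h) (s • h) := by
    simp only [taylorRemainder, hzx, map_add, map_sub, map_smul, sub_apply, smul_apply,
      smul_eq_mul]
    ring
  rw [hsplit, abs_le]
  rw [abs_le] at hnear hfar hslope hshift hquad
  constructor <;> linarith [show 0 ≤ ‖A‖ * (s * ‖h‖) * (s * ‖h‖) by positivity]

lemma abs_taylorRemainder_le_of_forall_abs_sub_le {h : E} {D : ℝ} {N : ℕ} (hN : 0 < N)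
    (hstep : ∀ i < N, |taylorRemainder g x p A ((i / N + 1 / N : ℝ) • h)
      - taylorRemainder g x p A ((i / N : ℝ) • h)| ≤ D * (1 / N * ‖h‖) ^ 2) :
    |taylorRemainder g x p A h| ≤ D / N * ‖h‖ ^ 2 := by
  have hN' : (N : ℝ) ≠ 0 := by positivity
  have hsum := dist_le_range_sum_of_dist_le (f := fun i : ℕ =>
    taylorRemainder g x p A ((i / N : ℝ) • h)) (d := fun _ => D * (1 / N * ‖h‖) ^ 2) N
    fun {i} hi => by
      rw [dist_comm, Real.dist_eq]
      simpa only [Nat.cast_add_one, add_div] using hstep i hi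
  have hzero : taylorRemainder g x p A 0 = 0 := by simp [taylorRemainder]
  simp only [CharP.cast_eq_zero, zero_div, zero_smul, hzero, div_self hN', one_smul,
    dist_zero_left, Real.norm_eq_abs, Finset.sum_const, Finset.card_range, nsmul_eq_mul] at hsum
  refine hsum.trans_eq ?_
  field_simp

/- The segment from `x` to `x + h` is cut into `N` pieces of length `‖h‖ / N`. Along each piece the
expansion of `g` at a point of `K` within `‖h‖ / N` is accurate up to `O(‖h‖² / N²)`, so the total
error is `O(‖h‖² / N)`. -/
theorem hasPeanoExpansionAt_of_isNonporousAt {G : E → E →L[ℝ] ℝ} (hB : B ∈ 𝓝 x) (hC : 0 ≤ C)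
    (hg : ∀ y ∈ K, HasQuadraticRemainderOn g B C y (G y)) (hK : IsNonporousAt K x)
    (hG : HasFDerivWithinAt G A K x) : HasPeanoExpansionAt g x (G x) A := by
  refine Asymptotics.isLittleO_iff.2 fun c hc => ?_
  obtain ⟨N, hN⟩ := exists_nat_gt ((5 * C + 1 + 2 * ‖A‖) / c)
  have hNpos : (0 : ℝ) < N := lt_of_le_of_lt (by positivity) hN
  have hNc : (5 * C + 1 + 2 * ‖A‖) / N ≤ c := by
    rw [div_lt_comm₀ hc hNpos] at hN
    exact hN.le
  obtain ⟨r, hr, hball⟩ := Metric.eventually_nhds_iff_ball.1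
    ((hK.eventually_exists_norm_sub_le hG (one_div_pos.2 hNpos)).and hB)
  filter_upwards [ball_mem_nhds (0 : E) hr] with h hh
  have hsegment : ∀ t ∈ Icc (0 : ℝ) 1, x + t • h ∈ ball x r ∧ ‖x + t • h - x‖ ≤ ‖h‖ := by
    intro t ht
    have hle : ‖x + t • h - x‖ ≤ ‖h‖ := by
      rw [add_sub_cancel_left, norm_smul, Real.norm_of_nonneg ht.1]
      exact mul_le_of_le_one_left (norm_nonneg h) ht.2
    exact ⟨mem_ball_iff_norm.2 (hle.trans_lt (mem_ball_zero_iff.1 hh)), hle⟩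
  simp only [norm_pow, Real.norm_eq_abs, abs_norm]
  refine (abs_taylorRemainder_le_of_forall_abs_sub_le (Nat.cast_pos.1 hNpos) fun i hi => ?_).trans
    (mul_le_mul_of_nonneg_right hNc (sq_nonneg ‖h‖))
  have hiN : (i : ℝ) / N + 1 / N ≤ 1 := by
    rw [← add_div, div_le_one hNpos]
    exact_mod_cast hi
  have hi0 : (0 : ℝ) ≤ i / N := by positivity
  have hN0 : (0 : ℝ) < 1 / N := by positivity
  obtain ⟨hy, hyx⟩ := hsegment (i / N) ⟨hi0, by linarith⟩
  obtain ⟨⟨z, hz, hyz, hGz⟩, hyB⟩ := hball _ hy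
  exact (hg z hz).abs_taylorRemainder_sub_le hC hN0.le hyB
    (hball _ (hsegment _ ⟨by linarith, hiN⟩).1).2 (hyz.trans (by gcongr)) (hGz.trans (by gcongr))

end ExpansionAtNonporousPoint

section Jensen

variable {E : Type*} [NormedAddCommGroup E] [MeasurableSpace E] [BorelSpace E]
  {g : E → ℝ} {x : E} {M r η : ℝ} {S U : Set E}

lemma measure_upperContactSet_ne_zero [NormedSpace ℝ E] [FiniteDimensional ℝ E] (μ : Measure E)
    [μ.IsAddHaarMeasure] (hg : StrongConvexOn (closedBall x (3 * r)) (-M) g)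
    (hcont : ContinuousOn g (closedBall x (3 * r)))
    (hmax : ∀ w ∈ closedBall x (3 * r), g w ≤ g x - η * ‖w - x‖ ^ 2)
    (hM : 0 ≤ M) (hr : 0 < r) (hη : 0 < η) : μ (upperContactSet g x r) ≠ 0 := fun hzero => by
  let _ : MeasurableSpace (E →L[ℝ] ℝ) := borel _
  have : BorelSpace (E →L[ℝ] ℝ) := ⟨rfl⟩
  have hdual : finrank ℝ (E →L[ℝ] ℝ) = finrank ℝ E := by
    rw [← Subspace.dual_finrank_eq (K := ℝ) (V := E)]
    exact LinearMap.toContinuousLinearMap.finrank_eq.symm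
  have himage := addHaar_image_eq_zero_of_lipschitzOnWith μ
    (Measure.addHaar : Measure (E →L[ℝ] ℝ)) hdual (lipschitzOnWith_fderiv hg hM hr) hzero
  exact (measure_ball_pos Measure.addHaar 0 (mul_pos hη hr)).ne' (measure_mono_null
    (ball_subset_fderiv_image_upperContactSet hg hcont hmax hM hr hη) himage)

theorem exists_hasPeanoExpansionAt_of_forall_le_sub [NormedSpace ℝ E] [FiniteDimensional ℝ E]
    (μ : Measure E) [μ.IsAddHaarMeasure] (hg : StrongConvexOn (closedBall x (3 * r)) (-M) g)
    (hcont : ContinuousOn g (closedBall x (3 * r)))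
    (hmax : ∀ w ∈ closedBall x (3 * r), g w ≤ g x - η * ‖w - x‖ ^ 2)
    (hM : 0 ≤ M) (hr : 0 < r) (hη : 0 < η) (hS : μ S = 0) :
    ∃ y ∈ closedBall x r, y ∉ S ∧ ∃ l Q, HasPeanoExpansionAt g y l Q ∧ ∀ v, Q v v ≤ 0 := by
  obtain ⟨y, hy, hyS, hdiff, hporous⟩ := exists_differentiableWithinAt_isNonporousAt μ
    (lipschitzOnWith_fderiv hg hM hr)
    (measure_upperContactSet_ne_zero μ hg hcont hmax hM hr hη) hS
  have hnhds := closedBall_three_mul_mem_nhds hr hy.1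
  have hexp := hasPeanoExpansionAt_of_isNonporousAt hnhds (by positivity)
    (fun z hz => hasQuadraticRemainderOn_fderiv hg hM hr hz) hporous hdiff.hasFDerivWithinAt
  refine ⟨y, hy.1, hyS, _, _, hexp, hexp.apply_self_nonpos ?_⟩
  filter_upwards [hnhds] with w hw using isSupergradientOn_fderiv hg hM hr hy w hw

theorem exists_hasPeanoExpansionAt_of_isLocalMax [InnerProductSpace ℝ E] [FiniteDimensional ℝ E]
    (μ : Measure E) [μ.IsAddHaarMeasure] (hU : U ∈ 𝓝 x) (hg : StrongConvexOn U (-M) g)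
    (hM : 0 ≤ M) (hmax : IsLocalMax g x) (hS : μ S = 0) {δ : ℝ} (hδ : 0 < δ) :
    ∃ y ∈ U, y ∉ S ∧ ∃ l Q, (∀ v w, Q v w = Q w v) ∧ HasPeanoExpansionAt g y l Q ∧
      ∀ v, Q v v ≤ δ * ‖v‖ ^ 2 := by
  let b : E → ℝ := quadraticPolynomial 0 (-δ • innerSL ℝ) x
  have hinner : ∀ v : E, (-δ • innerSL ℝ : E →L[ℝ] E →L[ℝ] ℝ) v v = -δ * ‖v‖ ^ 2 := fun v => by
    simp
  have hb : ∀ w, b w = -(δ / 2) * ‖w - x‖ ^ 2 := fun w => by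
    simp only [b, quadraticPolynomial, hinner, ContinuousAffineMap.zero_apply]
    ring
  obtain ⟨R, hR, hball⟩ := nhds_basis_closedBall.mem_iff.1
    (inter_mem (interior_mem_nhds.2 hU) hmax)
  obtain ⟨r, rfl⟩ : ∃ r, R = 3 * r := ⟨R / 3, by ring⟩
  have hbU : closedBall x (3 * r) ⊆ U := fun w hw => interior_subset (hball hw).1
  have hconv : StrongConvexOn (closedBall x (3 * r)) (-(M + δ)) (g + b) := by
    rw [neg_add]
    exact strongConvexOn_add_quadraticPolynomial
      (strongConvexOn_subset hg hbU (convex_closedBall x _)) 0 (fun v => (hinner v).ge) x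
  have hcont : ContinuousOn (g + b) (closedBall x (3 * r)) :=
    ((continuousOn_interior_of_strongConvexOn hg).mono fun w hw => (hball hw).1).add
      (continuous_quadraticPolynomial _ _ _).continuousOn
  have hpeak : ∀ w ∈ closedBall x (3 * r), (g + b) w ≤ (g + b) x - δ / 2 * ‖w - x‖ ^ 2 := by
    intro w hw
    have hgw : g w ≤ g x := (hball hw).2
    simp only [Pi.add_apply, hb, sub_self, norm_zero]
    linarith
  obtain ⟨y, hy, hyS, l, Q, hexp, hQ⟩ := exists_hasPeanoExpansionAt_of_forall_le_sub μ hconv hcont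
    hpeak (by positivity) (by linarith) (by positivity) hS
  have hexp' := hexp.sub (hasPeanoExpansionAt_quadraticPolynomial 0 (B := -δ • innerSL ℝ)
    (fun v w => congrArg (-δ • ·) (real_inner_comm w v)) x y)
  rw [add_sub_cancel_right] at hexp'
  obtain ⟨Q', hsymm, hself, hQ'⟩ := hexp'.exists_symmetric
  refine ⟨y, hbU (closedBall_subset_closedBall (by linarith) hy), hyS, _, Q', hsymm, hQ',
    fun v => ?_⟩
  rw [hself, sub_apply, sub_apply, hinner]
  linarith [hQ v]

end Jensen

section Penalization

lemma exists_nonneg_forall_sub_mul_lt {X : Type*} [TopologicalSpace X] {K : Set X} {F N : X → ℝ}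
    {m : ℝ} (hK : IsCompact K) (hF : ContinuousOn F K) (hN : ContinuousOn N K)
    (hN0 : ∀ y ∈ K, 0 ≤ N y) (hFm : ∀ y ∈ K, N y = 0 → F y < m) :
    ∃ k ≥ 0, ∀ y ∈ K, F y - k * N y < m := by
  suffices h : ∃ k ≥ 0, ∀ y ∈ K, y ∈ K → F y - k * N y < m by simpa using h
  refine hK.induction_on (p := fun s => ∃ k ≥ 0, ∀ y ∈ s, y ∈ K → F y - k * N y < m)
    ⟨0, le_rfl, by simp⟩ (fun s t hst => ?_) (fun s t => ?_) fun y hy => ?_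
  · rintro ⟨k, hk, ht⟩
    exact ⟨k, hk, fun y hy => ht y (hst hy)⟩
  · rintro ⟨k, hk, hs⟩ ⟨j, -, ht⟩
    refine ⟨max k j, le_max_of_le_left hk, fun y hy hyK => ?_⟩
    rcases hy with hy | hy
    · linarith [hs y hy hyK, mul_le_mul_of_nonneg_right (le_max_left k j) (hN0 y hyK)]
    · linarith [ht y hy hyK, mul_le_mul_of_nonneg_right (le_max_right k j) (hN0 y hyK)]
  · obtain ⟨k, hk, hky⟩ : ∃ k ≥ 0, F y - k * N y < m := by
      rcases (hN0 y hy).eq_or_lt' with h0 | hpos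
      · exact ⟨0, le_rfl, by simpa using hFm y hy h0⟩
      · refine ⟨|F y - m| / N y + 1, by positivity, ?_⟩
        rw [add_mul, div_mul_cancel₀ _ hpos.ne']
        linarith [le_abs_self (F y - m)]
    have hcont : ContinuousOn (fun z => F z - k * N z) K := hF.sub (continuousOn_const.mul hN)
    exact ⟨_, (hcont y hy).eventually_lt_const hky, k, hk, fun z hz _ => hz⟩

variable {E : Type*} [NormedAddCommGroup E] [InnerProductSpace ℝ E] {δ k : ℝ} {v : E}

/-- The symmetric form `v ↦ δ‖v‖² - k‖v - proj_V v‖²`, positive definite on `V` and, for large `k`,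
strongly penalizing displacements away from `V`. -/
def penaltyForm (V : Submodule ℝ E) [V.HasOrthogonalProjection] (δ k : ℝ) : E →L[ℝ] E →L[ℝ] ℝ :=
  δ • innerSL ℝ - k • (innerSL ℝ).bilinearComp Vᗮ.starProjection Vᗮ.starProjection

variable (V : Submodule ℝ E) [V.HasOrthogonalProjection]

lemma penaltyForm_apply_self (δ k : ℝ) (v : E) :
    penaltyForm V δ k v v = δ * ‖v‖ ^ 2 - k * ‖Vᗮ.starProjection v‖ ^ 2 :=
  congrArg₂ (δ * · - k * ·) (real_inner_self_eq_norm_sq v) (real_inner_self_eq_norm_sq _)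

lemma penaltyForm_symm (δ k : ℝ) (v w : E) : penaltyForm V δ k v w = penaltyForm V δ k w v :=
  congrArg₂ (δ • · - k • ·) (real_inner_comm w v) (real_inner_comm _ _)

variable {V}

lemma starProjection_orthogonal_eq_zero_iff : Vᗮ.starProjection v = 0 ↔ v ∈ V := by
  rw [Submodule.starProjection_apply_eq_zero_iff, Submodule.orthogonal_orthogonal]

lemma penaltyForm_apply_self_of_mem (hv : v ∈ V) : penaltyForm V δ k v v = δ * ‖v‖ ^ 2 := by
  simp [penaltyForm_apply_self, starProjection_orthogonal_eq_zero_iff.2 hv]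

lemma neg_mul_sq_norm_le_penaltyForm (hδ : 0 ≤ δ) (hk : 0 ≤ k) (v : E) :
    -k * ‖v‖ ^ 2 ≤ penaltyForm V δ k v v := by
  have hproj : ‖Vᗮ.starProjection v‖ ^ 2 ≤ ‖v‖ ^ 2 :=
    pow_le_pow_left₀ (norm_nonneg _) (Submodule.norm_starProjection_apply_le _ v) 2
  rw [penaltyForm_apply_self]
  nlinarith [mul_le_mul_of_nonneg_left hproj hk, mul_nonneg hδ (sq_nonneg ‖v‖)]

theorem exists_isLocalMax_add_penalty [FiniteDimensional ℝ E] {u : E → ℝ} {P : AffineSubspace ℝ E}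
    {l : E →ᴬ[ℝ] ℝ} {c x : E} {r : ℝ} (hr : 0 < r) (hu : ContinuousOn u (closedBall c r))
    (hsphere : ∀ y ∈ sphere c r ∩ P, u y ≤ l y) (hx : x ∈ closedBall c r ∩ P) (hlt : l x < u x) :
    ∃ δ > 0, ∃ k ≥ 0, ∃ z ∈ ball c r,
      IsLocalMax (u + quadraticPolynomial (-l) (penaltyForm P.direction δ k) x) z := by
  let δ := (u x - l x) / (4 * r ^ 2)
  have hδ : 0 < δ := div_pos (sub_pos.2 hlt) (by positivity)
  have hδr : 2 * δ * r ^ 2 < u x - l x := by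
    simp only [δ]
    field_simp
    linarith
  let N : E → ℝ := fun y => 1 / 2 * ‖P.directionᗮ.starProjection (y - x)‖ ^ 2
  let F : E → ℝ := fun y => u y - l y + δ / 2 * ‖y - x‖ ^ 2
  obtain ⟨k, hk, hboundary⟩ := exists_nonneg_forall_sub_mul_lt (F := F) (N := N) (m := u x - l x)
    (isCompact_sphere c r)
    (((hu.mono sphere_subset_closedBall).sub l.continuous.continuousOn).add (by fun_prop))
    (by fun_prop) (fun y _ => by positivity) fun y hy hNy => by
      have hyV : y - x ∈ P.direction :=
        starProjection_orthogonal_eq_zero_iff.1 (by simpa [N] using hNy)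
      have hyP : y ∈ P := by simpa using AffineSubspace.vadd_mem_of_mem_direction hyV hx.2
      have hdist : ‖y - x‖ ≤ 2 * r := by
        rw [← dist_eq_norm]
        linarith [dist_triangle_right y x c, mem_sphere.1 hy, mem_closedBall.1 hx.1]
      have hsq := pow_le_pow_left₀ (norm_nonneg _) hdist 2
      simp only [F]
      nlinarith [hsphere y ⟨hy, hyP⟩]
  have hg : ∀ y, (u + quadraticPolynomial (-l) (penaltyForm P.direction δ k) x) y
      = F y - k * N y := fun y => by
    simp only [F, N, Pi.add_apply, quadraticPolynomial, penaltyForm_apply_self,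
      ContinuousAffineMap.neg_apply]
    ring
  refine ⟨δ, hδ, k, hk, (isCompact_closedBall c r).exists_isLocalMax_mem_open ball_subset_closedBall
    (hu.add (continuous_quadraticPolynomial _ _ _).continuousOn) hx.1 (fun y hy => ?_) isOpen_ball⟩
  rw [closedBall_sdiff_ball] at hy
  rw [hg, hg x]
  simpa [F, N] using hboundary y hy

end Penalization

section SufficientCondition

variable {E : Type*} [NormedAddCommGroup E] [InnerProductSpace ℝ E] {L : ℝ} {u : E → ℝ} {ω : Set E}

namespace MemC1L

lemma exists_strongConvexOn (hu : MemC1L L u ω) {x : E} (hx : x ∈ ω) :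
    ∃ U ∈ 𝓝 x, U ⊆ ω ∧ StrongConvexOn U (-L) u := by
  obtain ⟨U, hU, hxU, hUω, -, hconv⟩ := hu x hx
  refine ⟨U, hU.mem_nhds hxU, hUω, strongConvexOn_iff_convex.2 (hconv.congr fun y _ => ?_)⟩
  ring

variable [FiniteDimensional ℝ E]

lemma continuousOn (hu : MemC1L L u ω) : ContinuousOn u ω := fun x hx => by
  obtain ⟨U, hU, -, hconv⟩ := hu.exists_strongConvexOn hx
  exact ((continuousOn_interior_of_strongConvexOn hconv).continuousAt
    (interior_mem_nhds.2 hU)).continuousWithinAt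

variable [MeasurableSpace E] [BorelSpace E]

theorem realQConvexOn (μ : Measure E) [μ.IsAddHaarMeasure] {q : ℕ} (hL : 0 ≤ L)
    (hu : MemC1L L u ω) (hq : ∀ᵐ x ∂μ, x ∈ ω → ∀ l Q, (∀ v w, Q v w = Q w v) →
      HasPeanoExpansionAt u x l Q → sigNeg (hessianForm Q) ≤ q) :
    RealQConvexOn q (fun x => (u x : EReal)) ω := by
  refine ⟨fun x _ => EReal.coe_ne_top _,
    (continuous_coe_real_ereal.comp_continuousOn hu.continuousOn).upperSemicontinuousOn, ?_⟩
  intro P hP c r hr hball l hsphere x hx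
  rw [closure_ball _ hr.ne'] at hball
  simp only [EReal.coe_le_coe_iff] at hsphere ⊢
  by_contra! hlt
  let a : E →ᴬ[ℝ] ℝ := ⟨l, l.continuous_of_finiteDimensional⟩
  obtain ⟨δ, hδ, k, hk, z, hz, hmax⟩ := exists_isLocalMax_add_penalty (l := a) hr
    (hu.continuousOn.mono hball) hsphere hx hlt
  obtain ⟨U, hU, hUω, hconv⟩ := hu.exists_strongConvexOn (hball (ball_subset_closedBall hz))
  have hconv' := strongConvexOn_add_quadraticPolynomial hconv (-a)
    (neg_mul_sq_norm_le_penaltyForm (V := P.direction) hδ.le hk) x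
  rw [← neg_add] at hconv'
  obtain ⟨y, hyU, hyq, m, Q, hQ, hexp, hle⟩ := exists_hasPeanoExpansionAt_of_isLocalMax μ hU hconv'
    (by positivity) hmax (ae_iff.1 hq) (half_pos hδ)
  have hexp' := hexp.sub (hasPeanoExpansionAt_quadraticPolynomial (-a)
    (penaltyForm_symm P.direction δ k) x y)
  rw [add_sub_cancel_right] at hexp'
  obtain ⟨v, hv, hv0, hnonneg⟩ := (sigNeg_le_iff_forall_exists_nonneg _ _).1
    (not_not.1 hyq (hUω hyU) _ _ (fun v w => by
      rw [sub_apply, sub_apply, sub_apply, sub_apply, hQ, penaltyForm_symm]) hexp') _ hP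
  rw [hessianForm_apply, sub_apply, sub_apply, penaltyForm_apply_self_of_mem hv] at hnonneg
  have hpos : 0 < δ * ‖v‖ ^ 2 := by positivity
  linarith [hle v]

end MemC1L

end SufficientCondition

theorem realQConvex_twice_differentiable_general {E : Type*} [NormedAddCommGroup E]
    [InnerProductSpace ℝ E] [FiniteDimensional ℝ E] [MeasurableSpace E] [BorelSpace E]
    (μ : Measure E) [μ.IsAddHaarMeasure] (q : ℕ) {ω : Set E} (hω : IsOpen ω) :
    (∀ u : E → EReal, RealQConvexOn q u ω → ∀ p ∈ ω, ∀ f : E → ℝ, (∀ᶠ x in 𝓝 p, u x = f x) →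
      ∀ l Q, HasPeanoExpansionAt f p l Q → sigNeg (hessianForm Q) ≤ q) ∧
    (∀ (u : E → ℝ) (L : ℝ), 0 ≤ L → MemC1L L u ω →
      (∀ᵐ x ∂μ, x ∈ ω → ∀ l Q, (∀ v w, Q v w = Q w v) → HasPeanoExpansionAt u x l Q →
        sigNeg (hessianForm Q) ≤ q) →
      RealQConvexOn q (fun x => (u x : EReal)) ω) :=
  ⟨fun _ hu _ hp _ huf _ _ hf => (sigNeg_le_iff_forall_exists_nonneg _ q).2 fun _ hV =>
      hu.exists_nonneg_of_hasPeanoExpansionAt (hω.mem_nhds hp) huf hf hV,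
    fun _ _ hL hu hq => hu.realQConvexOn μ hL hq⟩

/-- (a) If `u` is real q-convex on `ω` and twice differentiable at `p ∈ ω` (i.e. `u` agrees
near `p` with a real-valued `f` having a symmetric second-order expansion), then the real
Hessian at `p` has at most `q` negative eigenvalues.
(b) If `u ∈ C¹_L(ω)` and its real Hessian (as a symmetric second-order expansion) has at
most `q` negative eigenvalues at almost every point of `ω`, then `u` is real q-convex. -/
theorem realQConvex_twice_differentiable {n q : ℕ} (hq : q < n)
    (ω : Set (EuclideanSpace ℝ (Fin n))) (hω : IsOpen ω) :
    (∀ u : EuclideanSpace ℝ (Fin n) → EReal, RealQConvexOn q u ω →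
      ∀ p ∈ ω, ∀ f : EuclideanSpace ℝ (Fin n) → ℝ,
        (∀ᶠ x in nhds p, u x = (f x : EReal)) →
        ∀ (l : EuclideanSpace ℝ (Fin n) →L[ℝ] ℝ)
          (Q : EuclideanSpace ℝ (Fin n) →L[ℝ] EuclideanSpace ℝ (Fin n) →L[ℝ] ℝ),
          (∀ v w, Q v w = Q w v) → HasSecondOrderExpansionAt f p l Q →
          NegEigAtMost (bilinMatrix Q) q) ∧
    (∀ (u : EuclideanSpace ℝ (Fin n) → ℝ) (L : ℝ), 0 ≤ L → MemC1L L u ω →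
      (∀ᵐ x ∂(MeasureTheory.volume :
          MeasureTheory.Measure (EuclideanSpace ℝ (Fin n))), x ∈ ω →
        ∀ (l : EuclideanSpace ℝ (Fin n) →L[ℝ] ℝ)
          (Q : EuclideanSpace ℝ (Fin n) →L[ℝ] EuclideanSpace ℝ (Fin n) →L[ℝ] ℝ),
          (∀ v w, Q v w = Q w v) → HasSecondOrderExpansionAt u x l Q →
          NegEigAtMost (bilinMatrix Q) q) →
      RealQConvexOn q (fun x => (u x : EReal)) ω) := by
  obtain ⟨hnec, hsuff⟩ := realQConvex_twice_differentiable_general MeasureTheory.volume q hω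
  refine ⟨fun u hu p hp f huf l Q hQ hf =>
    negEigAtMost_bilinMatrix_iff.2 ⟨hQ, hnec u hu p hp f huf l Q hf⟩, fun u L hL hu hq => ?_⟩
  refine hsuff u L hL hu (hq.mono fun x hx hxω l Q hQ hf => ?_)
  exact (negEigAtMost_bilinMatrix_iff.1 (hx hxω l Q hQ hf)).2
end
end

section
/- Let ω be an open set in ℝⁿ, let q, r ≥ 0, let u₁ be a real q-convex function on ω and let u₂ be a real r-convex function on ω. Then the sum u₁ + u₂ (with the convention (−∞) + t = −∞) is real (q+r)-convex on ω. -/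
open Metric Set Filter

noncomputable section

/-!
Suppose that `u₁ + u₂ ≤ l` on the sphere inside `P` but not on the ball, where `P` has dimension
`q + r + 1`; subtract `l` and work inside `P`. Replace `u₁` and `u₂` by sup-convolutions, which
become convex functions `f₁` and `f₂` after adding `t / 2 * ‖y‖ ^ 2`. For a small `δ > 0`, put
`κ = 2 * t - δ`. Every affine function of small slope, shifted suitably, touches
`κ / 2 * ‖y‖ ^ 2 - (f₁ y + f₂ y)` from below, and by Jensen's lemma the contact points have positive
measure. A `C^{1,1}` function squeezed between `f₁` and the resulting bounds
`κ / 2 * ‖y‖ ^ 2 - f₂ y - ℓ y` is twice differentiable almost everywhere, hence at some contact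
point. Its Hessian `A` there bounds `f₁` from above to second order, and `κ - A` bounds `f₂`.

Since `(q + 1) + (r + 1)` exceeds the dimension of `P` by only one, either `A ≤ t - δ / 2` on a
`(q + 1)`-dimensional subspace or `κ - A ≤ t - δ / 2` on an `(r + 1)`-dimensional one. Undoing the
sup-convolution, `u₁` or `u₂` is touched from above along that subspace by a strictly concave
quadratic polynomial, which real convexity forbids on small spheres.
-/

theorem exists_affine_le_of_convexOn {E : Type*} [AddCommGroup E] [Module ℝ E] [TopologicalSpace E]
    [IsTopologicalAddGroup E] [ContinuousSMul ℝ E] {f : E → ℝ} (hf : ConvexOn ℝ univ f)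
    (hc : Continuous f) (x : E) : ∃ L : E →L[ℝ] ℝ, ∀ y, f x + L (y - x) ≤ f y := by
  have hopen : IsOpen {z : E × ℝ | z.1 ∈ univ ∧ f z.1 < z.2} := by
    simpa using isOpen_lt (hc.comp continuous_fst) continuous_snd
  obtain ⟨L, hL⟩ := geometric_hahn_banach_point_open (x := (x, f x)) hf.convex_strict_epigraph
    hopen (by simp)
  have hsplit (y : E) (s : ℝ) : L (y, s) = L (y, 0) + s * L (0, 1) := by
    rw [← smul_eq_mul, ← map_smul, ← map_add]
    simp
  have hsep (y : E) (s : ℝ) (hs : f y < s) :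
      L (x, 0) + f x * L (0, 1) < L (y, 0) + s * L (0, 1) := by
    simpa only [← hsplit] using hL (y, s) ⟨mem_univ y, hs⟩
  have hpos : 0 < L (0, 1) := by linarith [hsep x (f x + 1) (by linarith)]
  refine ⟨-(L (0, 1))⁻¹ • L.comp (.inl ℝ E ℝ), fun y ↦ le_of_forall_gt fun s hs ↦ ?_⟩
  have hlt : (L (0, 1))⁻¹ * (L (x, 0) - L (y, 0)) < s - f x := by
    rw [inv_mul_lt_iff₀ hpos]
    linarith [hsep y s hs]
  calc f x + (-(L (0, 1))⁻¹ • L.comp (.inl ℝ E ℝ)) (y - x)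
      = f x + (L (0, 1))⁻¹ * (L (x, 0) - L (y, 0)) := by
        rw [map_sub]
        simp only [smul_apply, ContinuousLinearMap.comp_apply, ContinuousLinearMap.inl_apply,
          smul_eq_mul]
        ring
    _ < s := by linarith

section QuadraticSupport

open scoped RealInnerProductSpace

variable {E : Type*} [NormedAddCommGroup E] [InnerProductSpace ℝ E] {f g : E → ℝ} {m m' κ : ℝ}
  {a b p q x y : E}

/-- The paraboloid with slope `p` and opening `m` at `x` supports `f` from below. A subgradient is
the case `m = 0`; support from above is expressed through `-f`, with slope `-p`. -/
def HasQuadraticSupportAt (f : E → ℝ) (m : ℝ) (p x : E) : Prop :=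
  ∀ y, f x + ⟪p, y - x⟫ + m / 2 * ‖y - x‖ ^ 2 ≤ f y

theorem norm_sq_eq_add_inner_add_norm_sub_sq (x y : E) :
    ‖y‖ ^ 2 = ‖x‖ ^ 2 + 2 * ⟪x, y - x⟫ + ‖y - x‖ ^ 2 := by
  rw [← norm_add_sq_real, add_sub_cancel]

theorem exists_hasQuadraticSupportAt_of_strongConvexOn [CompleteSpace E]
    (hf : StrongConvexOn univ m f) (hc : Continuous f) (x : E) :
    ∃ p, HasQuadraticSupportAt f m p x := by
  obtain ⟨L, hL⟩ := exists_affine_le_of_convexOn (strongConvexOn_iff_convex.mp hf) (by fun_prop) x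
  refine ⟨(InnerProductSpace.toDual ℝ E).symm L + m • x, fun y ↦ ?_⟩
  rw [inner_add_left, InnerProductSpace.toDual_symm_apply, real_inner_smul_left]
  linear_combination hL y - m / 2 * norm_sq_eq_add_inner_add_norm_sub_sq x y

theorem eq_zero_of_forall_inner_le_mul_norm_sq {C : ℝ} (h : ∀ k, ⟪p, k⟫ ≤ C * ‖k‖ ^ 2) :
    p = 0 := by
  by_contra hp
  have hpos : 0 < ‖p‖ ^ 2 := by positivity
  obtain ⟨s, hs, hsC⟩ := exists_pos_mul_lt one_pos C
  have hsp := h (s • p)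
  rw [real_inner_smul_right, real_inner_self_eq_norm_sq, norm_smul, mul_pow, Real.norm_eq_abs,
    sq_abs] at hsp
  nlinarith [mul_pos hs hpos]

namespace HasQuadraticSupportAt

theorem slope_eq (hp : HasQuadraticSupportAt f m p x) (hq : HasQuadraticSupportAt (-f) m' (-q) x) :
    p = q := by
  refine sub_eq_zero.mp (eq_zero_of_forall_inner_le_mul_norm_sq (C := -(m + m') / 2) fun k ↦ ?_)
  have hpk := hp (x + k)
  have hqk := hq (x + k)
  simp only [add_sub_cancel_left, Pi.neg_apply, inner_neg_left] at hpk hqk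
  rw [inner_sub_left]
  linarith

theorem hasGradientAt [CompleteSpace E] (hp : HasQuadraticSupportAt f m p x)
    (hp' : HasQuadraticSupportAt (-f) m' (-p) x) : HasGradientAt f p x := by
  rw [hasGradientAt_iff_isLittleO]
  have hO : (fun y ↦ f y - f x - ⟪p, y - x⟫) =O[nhds x] fun y ↦ ‖y - x‖ ^ 2 := by
    refine .of_bound (max (-m / 2) (-m' / 2)) (.of_forall fun y ↦ ?_)
    have hy := hp y
    have hy' := hp' y
    simp only [Pi.neg_apply, inner_neg_left] at hy'
    have hl := mul_le_mul_of_nonneg_right (le_max_left (-m / 2) (-m' / 2)) (sq_nonneg ‖y - x‖)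
    have hr := mul_le_mul_of_nonneg_right (le_max_right (-m / 2) (-m' / 2)) (sq_nonneg ‖y - x‖)
    rw [norm_pow, norm_norm, Real.norm_eq_abs, abs_le]
    constructor <;> linarith
  exact hO.trans_isLittleO <| (Asymptotics.isLittleO_norm_pow_id one_lt_two).comp_tendsto <|
    tendsto_sub_nhds_zero_iff.mpr tendsto_id

theorem add_norm_sub_sq_le (hκ : 0 < κ) (ha : HasQuadraticSupportAt f 0 a x)
    (hb : HasQuadraticSupportAt (-f) (-κ) (-b) y) :
    f x + ⟪a, y - x⟫ + ‖a - b‖ ^ 2 / (2 * κ) ≤ f y := by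
  -- the two paraboloids are compared at the point where their difference is extremal
  have hax := ha (y + κ⁻¹ • (a - b))
  have hby := hb (y + κ⁻¹ • (a - b))
  rw [add_sub_right_comm, inner_add_right, real_inner_smul_right] at hax
  rw [add_sub_cancel_left, inner_neg_left, real_inner_smul_right, norm_smul, mul_pow, norm_inv,
    Real.norm_of_nonneg hκ.le, Pi.neg_apply, Pi.neg_apply] at hby
  have hsq : ⟪a, a - b⟫ - ⟪b, a - b⟫ = ‖a - b‖ ^ 2 := by
    rw [← inner_sub_left, real_inner_self_eq_norm_sq]
  have hκsq : κ * κ⁻¹ ^ 2 = κ⁻¹ := by field_simp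
  rw [div_eq_mul_inv, mul_inv]
  linear_combination hax + hby + -κ⁻¹ * hsq + ‖a - b‖ ^ 2 / 2 * hκsq

theorem norm_slope_sub_le (hκ : 0 < κ) (hx : HasQuadraticSupportAt f 0 a x)
    (hx' : HasQuadraticSupportAt (-f) (-κ) (-a) x) (hy : HasQuadraticSupportAt f 0 b y)
    (hy' : HasQuadraticSupportAt (-f) (-κ) (-b) y) : ‖a - b‖ ≤ κ * ‖x - y‖ := by
  have hxy := add_norm_sub_sq_le hκ hx hy'
  have hyx := add_norm_sub_sq_le hκ hy hx'
  rw [norm_sub_rev b a] at hyx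
  have hinner : ⟪a - b, x - y⟫ = -⟪a, y - x⟫ - ⟪b, x - y⟫ := by
    rw [inner_sub_left, ← neg_sub y x, inner_neg_right]
  have hsq : ‖a - b‖ ^ 2 / κ ≤ ‖a - b‖ * ‖x - y‖ := by
    calc ‖a - b‖ ^ 2 / κ = ‖a - b‖ ^ 2 / (2 * κ) + ‖a - b‖ ^ 2 / (2 * κ) := by field_simp; ring
      _ ≤ ⟪a - b, x - y⟫ := by linarith
      _ ≤ ‖a - b‖ * ‖x - y‖ := real_inner_le_norm _ _
  rw [div_le_iff₀ hκ] at hsq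
  rcases (norm_nonneg (a - b)).eq_or_lt' with h0 | hpos
  · rw [h0]
    positivity
  · exact le_of_mul_le_mul_left (by linarith) hpos

theorem neg_of_strongConcaveOn [CompleteSpace E] (h : HasQuadraticSupportAt f m p x)
    (hf : StrongConcaveOn univ κ f) (hc : Continuous f) : HasQuadraticSupportAt (-f) κ (-p) x := by
  obtain ⟨q, hq⟩ := exists_hasQuadraticSupportAt_of_strongConvexOn hf.neg hc.neg x
  rw [← neg_neg q] at hq
  rwa [h.slope_eq hq]

theorem hasGradientAt_of_strongConcaveOn [CompleteSpace E] (h : HasQuadraticSupportAt f m p x)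
    (hf : StrongConcaveOn univ κ f) (hc : Continuous f) : HasGradientAt f p x :=
  h.hasGradientAt (h.neg_of_strongConcaveOn hf hc)

end HasQuadraticSupportAt

theorem lipschitzOnWith_gradient_of_strongConcaveOn [CompleteSpace E] {κ : NNReal} {s : Set E}
    (hκ : 0 < κ) (hf : StrongConcaveOn univ (-κ : ℝ) f) (hc : Continuous f)
    (hs : ∀ x ∈ s, ∃ a, HasQuadraticSupportAt f 0 a x) :
    LipschitzOnWith κ (gradient f) s := by
  refine .of_dist_le_mul fun x hx y hy ↦ ?_
  obtain ⟨a, ha⟩ := hs x hx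
  obtain ⟨b, hb⟩ := hs y hy
  rw [dist_eq_norm, dist_eq_norm, (ha.hasGradientAt_of_strongConcaveOn hf hc).gradient,
    (hb.hasGradientAt_of_strongConcaveOn hf hc).gradient]
  exact ha.norm_slope_sub_le hκ (ha.neg_of_strongConcaveOn hf hc) hb
    (hb.neg_of_strongConcaveOn hf hc)

theorem exists_hasQuadraticSupportAt_of_superlinear [ProperSpace E] (hc : Continuous f)
    (hf : ∀ C : ℝ, ∃ D : ℝ, ∀ y, C * ‖y‖ - D ≤ f y) (a : E) :
    ∃ x, HasQuadraticSupportAt f 0 a x := by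
  obtain ⟨D, hD⟩ := hf (‖a‖ + 1)
  have htop : Tendsto (fun y ↦ f y - ⟪a, y⟫) (cocompact E) atTop := by
    refine tendsto_atTop_mono (fun y ↦ ?_)
      (tendsto_atTop_add_const_right _ (-D) tendsto_norm_cocompact_atTop)
    linarith [hD y, real_inner_le_norm a y]
  have hc' : Continuous fun y ↦ f y - ⟪a, y⟫ := by fun_prop
  obtain ⟨x, hx⟩ := hc'.exists_forall_le htop
  refine ⟨x, fun y ↦ ?_⟩
  rw [inner_sub_right]
  linarith [hx y]

end QuadraticSupport

theorem convexOn_of_isLUB {E : Type*} [AddCommMonoid E] [Module ℝ E] {s : Set E}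
    {T : Set (E → ℝ)} {G : E → ℝ} (hs : Convex ℝ s) (hT : ∀ g ∈ T, ConvexOn ℝ s g)
    (hG : IsLUB T G) : ConvexOn ℝ s G := by
  refine ⟨hs, fun x hx y hy a b ha hb hab ↦ (isLUB_pi.mp hG (a • x + b • y)).2 ?_⟩
  rintro _ ⟨g, hg, rfl⟩
  calc g (a • x + b • y) ≤ a • g x + b • g y := (hT g hg).2 hx hy ha hb hab
    _ ≤ a • G x + b • G y := by
      gcongr
      exacts [hG.1 hg x, hG.1 hg y]

/- For a convex minorant `G` of `φ`-concave functions `w i`, the function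
`z ↦ a * G (z + b • (x - y)) + b * G (z - a • (x - y)) + a * b * φ ‖x - y‖` is again a convex
minorant. Evaluating it at `a • x + b • y` shows that the largest one is itself `φ`-concave. -/
theorem exists_convexOn_uniformConcaveOn_between {E ι : Type*} [NormedAddCommGroup E]
    [NormedSpace ℝ E] [Nonempty ι] {φ : ℝ → ℝ} {f : E → ℝ} {w : ι → E → ℝ}
    (hf : ConvexOn ℝ univ f) (hw : ∀ i, UniformConcaveOn univ φ (w i)) (hfw : ∀ i, f ≤ w i) :
    ∃ G, f ≤ G ∧ (∀ i, G ≤ w i) ∧ ConvexOn ℝ univ G ∧ UniformConcaveOn univ φ G := by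
  set T : Set (E → ℝ) := {g | ConvexOn ℝ univ g ∧ ∀ i, g ≤ w i}
  have hfT : f ∈ T := ⟨hf, hfw⟩
  have hG : IsLUB T (sSup T) :=
    isLUB_csSup ⟨f, hfT⟩ ⟨w (Classical.arbitrary ι), fun g hg ↦ hg.2 _⟩
  have hconv : ConvexOn ℝ univ (sSup T) := convexOn_of_isLUB convex_univ (fun g hg ↦ hg.1) hG
  have hle (i : ι) : sSup T ≤ w i := hG.2 fun g hg ↦ hg.2 i
  refine ⟨sSup T, hG.1 hfT, hle, hconv, convex_univ, fun x _ y _ a b ha hb hab ↦ ?_⟩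
  have hmem : (fun z ↦ a • sSup T (z + b • (x - y)) + b • sSup T (z + -a • (x - y)) +
      a * b * φ ‖x - y‖) ∈ T := by
    refine ⟨(((hconv.translate_left (b • (x - y))).smul ha).add
      ((hconv.translate_left (-a • (x - y))).smul hb)).add_const (a * b * φ ‖x - y‖), fun i z ↦ ?_⟩
    have hmean : a • (z + b • (x - y)) + b • (z + -a • (x - y)) = z := by
      linear_combination (norm := module) hab • z
    have hdiff : z + b • (x - y) - (z + -a • (x - y)) = x - y := by
      linear_combination (norm := module) hab • (x - y)
    have hwi := (hw i).2 (mem_univ (z + b • (x - y))) (mem_univ (z + -a • (x - y))) ha hb hab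
    rw [hmean, hdiff] at hwi
    refine le_trans ?_ hwi
    simp only [smul_eq_mul]
    gcongr
    exacts [hle i _, hle i _]
  have hx : a • x + b • y + b • (x - y) = x := by linear_combination (norm := module) hab • x
  have hy : a • x + b • y + -a • (x - y) = y := by linear_combination (norm := module) hab • y
  simpa only [hx, hy] using hG.1 hmem (a • x + b • y)

section SecondOrder

open scoped RealInnerProductSpace Topology

theorem isLittleO_taylor_two {E F : Type*} [NormedAddCommGroup E] [NormedSpace ℝ E]
    [NormedAddCommGroup F] [NormedSpace ℝ F] {f : E → F} {f' : E → E →L[ℝ] F}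
    {f'' : E →L[ℝ] E →L[ℝ] F} {x : E} (hf : ∀ᶠ y in 𝓝 x, HasFDerivAt f (f' y) y)
    (hx : HasFDerivAt f' f'' x) :
    (fun k ↦ f (x + k) - f x - f' x k - (1 / 2 : ℝ) • f'' k k) =o[𝓝 0] fun k ↦ ‖k‖ ^ 2 := by
  refine Asymptotics.isLittleO_iff.mpr fun η hη ↦ ?_
  have hadd : Tendsto (x + ·) (𝓝 0) (𝓝 x) := by
    simpa using (continuous_const_add x).tendsto 0
  obtain ⟨s, hs, hball⟩ := eventually_nhds_iff_ball.mp <| (hadd.eventually hf).and <|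
    (hasFDerivAt_iff_isLittleO_nhds_zero.mp hx).def hη
  filter_upwards [ball_mem_nhds 0 hs] with k hk
  have hsub {h : E} (hh : h ∈ closedBall 0 ‖k‖) : h ∈ ball 0 s :=
    closedBall_subset_ball (by simpa using hk) hh
  have hderiv (h : E) (hh : h ∈ closedBall 0 ‖k‖) :
      HasFDerivAt (fun k ↦ f (x + k) - f x - f' x k - (1 / 2 : ℝ) • f'' k k)
        (f' (x + h) - f' x - f'' h) h := by
    refine (((((hasFDerivAt_comp_add_left x).mpr (hball h (hsub hh)).1).sub_const (f x)).sub
      (f' x).hasFDerivAt).sub ((f''.hasFDerivAt.clm_apply (hasFDerivAt_id h)).const_smul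
        (1 / 2 : ℝ))).congr_fderiv ?_
    ext v
    simp [second_derivative_symmetric_of_eventually hf hx v h, ← add_smul, ← two_mul]
  have hbound (h : E) (hh : h ∈ closedBall 0 ‖k‖) : ‖f' (x + h) - f' x - f'' h‖ ≤ η * ‖k‖ :=
    (hball h (hsub hh)).2.trans (by gcongr; simpa using hh)
  have hmean := (convex_closedBall (0 : E) ‖k‖).norm_image_sub_le_of_norm_hasFDerivWithin_le
    (fun h hh ↦ (hderiv h hh).hasFDerivWithinAt) hbound (mem_closedBall_self (norm_nonneg k))
    (by simp : k ∈ closedBall 0 ‖k‖)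
  simpa [mul_assoc, ← sq] using hmean

variable {E : Type*} [NormedAddCommGroup E] [InnerProductSpace ℝ E] {f : E → ℝ}

/-- `(p, A)` is a second-order superjet of `f` at `x`: up to `o(‖k‖ ^ 2)`, the quadratic polynomial
with gradient `p` and Hessian `A` bounds `f` from above near `x`. -/
def HasUpperJetAt (f : E → ℝ) (p : E) (A : E →L[ℝ] E) (x : E) : Prop :=
  ∀ η > 0, ∀ᶠ k in 𝓝 0, f (x + k) ≤ f x + ⟪p, k⟫ + ⟪A k, k⟫ / 2 + η * ‖k‖ ^ 2

theorem isLittleO_of_hasFDerivAt_gradient [CompleteSpace E] {f' : E → E} {A : E →L[ℝ] E} {x : E}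
    (hf : ∀ᶠ y in 𝓝 x, HasGradientAt f (f' y) y) (hA : HasFDerivAt f' A x) :
    (fun k ↦ f (x + k) - f x - ⟪f' x, k⟫ - ⟪A k, k⟫ / 2) =o[𝓝 0] fun k ↦ ‖k‖ ^ 2 := by
  have h := isLittleO_taylor_two (f' := fun y ↦ innerSL ℝ (f' y))
    (hf.mono fun y hy ↦ hy.hasFDerivAt) ((innerSL ℝ).hasFDerivAt.comp x hA)
  refine h.congr_left fun k ↦ ?_
  rw [ContinuousLinearMap.comp_apply, innerSL_apply_apply, innerSL_apply_apply ℝ (A k), smul_eq_mul]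
  ring

theorem isSymmetric_of_hasFDerivAt_gradient [CompleteSpace E] {f' : E → E} {A : E →L[ℝ] E} {x : E}
    (hf : ∀ᶠ y in 𝓝 x, HasGradientAt f (f' y) y) (hA : HasFDerivAt f' A x) :
    (A : E →ₗ[ℝ] E).IsSymmetric := fun v w ↦ by
  have h := second_derivative_symmetric_of_eventually (f' := fun y ↦ innerSL ℝ (f' y))
    (hf.mono fun y hy ↦ hy.hasFDerivAt) ((innerSL ℝ).hasFDerivAt.comp x hA) v w
  rw [ContinuousLinearMap.comp_apply, ContinuousLinearMap.comp_apply, innerSL_apply_apply ℝ (A v),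
    innerSL_apply_apply ℝ (A w), real_inner_comm] at h
  simpa only [ContinuousLinearMap.coe_coe, real_inner_comm] using h

end SecondOrder

section ContactSet

open scoped RealInnerProductSpace Topology
open MeasureTheory

variable {E : Type*} [NormedAddCommGroup E] [InnerProductSpace ℝ E] {f ψ f₁ f₂ : E → ℝ} {κ ρ : ℝ}

theorem strongConcaveOn_mul_norm_sq_sub {s : Set E} (hf : ConvexOn ℝ s f) :
    StrongConcaveOn s (-κ) fun y ↦ κ / 2 * ‖y‖ ^ 2 - f y := by
  refine strongConcaveOn_iff_convex.mpr (hf.neg.congr fun y _ ↦ ?_)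
  rw [Pi.neg_apply]
  ring

/- `f₁` lies below every `κ / 2 * ‖y‖ ^ 2 - f₂ y - ℓ y`, where `ℓ` is a supporting affine function
of `κ / 2 * ‖y‖ ^ 2 - (f₁ y + f₂ y)`, with equality where `ℓ` touches. -/
theorem exists_convexOn_strongConcaveOn_between_of_contact (hf₁ : ConvexOn ℝ univ f₁)
    (hf₂ : ConvexOn ℝ univ f₂) (hψ : ψ = fun y ↦ κ / 2 * ‖y‖ ^ 2 - (f₁ y + f₂ y))
    (hcontact : ∃ a x, HasQuadraticSupportAt ψ 0 a x) :
    ∃ G, f₁ ≤ G ∧ ConvexOn ℝ univ G ∧ StrongConcaveOn univ (-κ) G ∧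
      ∀ a x, HasQuadraticSupportAt ψ 0 a x →
        ∀ y, G y ≤ κ / 2 * ‖y‖ ^ 2 - (f₂ y + ⟪a, y⟫ + (ψ x - ⟪a, x⟫)) := by
  let ι := {i : E × E // HasQuadraticSupportAt ψ 0 i.1 i.2}
  let w (i : ι) (y : E) : ℝ :=
    κ / 2 * ‖y‖ ^ 2 - (f₂ y + ⟪i.1.1, y⟫ + (ψ i.1.2 - ⟪i.1.1, i.1.2⟫))
  have hw (i : ι) : StrongConcaveOn univ (-κ) (w i) :=
    strongConcaveOn_mul_norm_sq_sub <|
      (hf₂.add ((innerSL ℝ i.1.1).toLinearMap.convexOn convex_univ)).add_const _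
  have hfw (i : ι) : f₁ ≤ w i := fun y ↦ by
    have hi := i.2 y
    rw [inner_sub_right] at hi
    simp only [w, hψ] at hi ⊢
    linarith
  obtain ⟨a₀, x₀, h₀⟩ := hcontact
  have : Nonempty ι := ⟨⟨(a₀, x₀), h₀⟩⟩
  obtain ⟨G, hfG, hGw, hG, hG'⟩ := exists_convexOn_uniformConcaveOn_between hf₁ hw hfw
  exact ⟨G, hfG, hG, hG', fun a x hax ↦ hGw ⟨(a, x), hax⟩⟩

variable [FiniteDimensional ℝ E]

/- Jensen's lemma: the gradient is Lipschitz on the contact set and maps it onto the ball. -/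
theorem hausdorffMeasure_contactSet_pos [MeasurableSpace E] [BorelSpace E] (hκ : 0 < κ)
    (hρ : 0 < ρ) (hψ : StrongConcaveOn univ (-κ) ψ) (hc : Continuous ψ)
    (hcontact : ∀ a ∈ ball 0 ρ, ∃ x, HasQuadraticSupportAt ψ 0 a x) :
    0 < μH[Module.finrank ℝ E] {x | ∃ a ∈ ball 0 ρ, HasQuadraticSupportAt ψ 0 a x} := by
  lift κ to NNReal using hκ.le
  set K : Set E := {x | ∃ a ∈ ball 0 ρ, HasQuadraticSupportAt ψ 0 a x}
  have hlip : LipschitzOnWith κ (gradient ψ) K :=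
    lipschitzOnWith_gradient_of_strongConcaveOn (mod_cast hκ) hψ hc
      fun x ⟨a, _, ha⟩ ↦ ⟨a, ha⟩
  have himage : ball 0 ρ ⊆ gradient ψ '' K := fun a ha ↦ by
    obtain ⟨x, hx⟩ := hcontact a ha
    exact ⟨x, ⟨a, ha, hx⟩, (hx.hasGradientAt_of_strongConcaveOn hψ hc).gradient⟩
  refine pos_iff_ne_zero.mpr fun hzero ↦ ?_
  have hball : μH[Module.finrank ℝ E] (ball (0 : E) ρ) ≤ 0 :=
    calc μH[Module.finrank ℝ E] (ball (0 : E) ρ)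
        ≤ μH[Module.finrank ℝ E] (gradient ψ '' K) := measure_mono himage
      _ ≤ κ ^ (Module.finrank ℝ E : ℝ) * μH[Module.finrank ℝ E] K :=
        hlip.hausdorffMeasure_image_le (Nat.cast_nonneg _)
      _ = 0 := by rw [hzero, mul_zero]
  have := isAddHaarMeasure_hausdorffMeasure (E := E)
  exact (measure_ball_pos _ (0 : E) hρ).not_ge hball

theorem ae_differentiableAt_gradient_of_strongConcaveOn [MeasurableSpace E] [BorelSpace E]
    {μ : Measure E} [μ.IsAddHaarMeasure] (hκ : 0 < κ) (hf : ConvexOn ℝ univ f)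
    (hf' : StrongConcaveOn univ (-κ) f) :
    (∀ x, HasGradientAt f (gradient f x) x) ∧ ∀ᵐ x ∂μ, DifferentiableAt ℝ (gradient f) x := by
  lift κ to NNReal using hκ.le
  have hc : Continuous f := hf.locallyLipschitz.continuous
  have hsupport (x : E) : ∃ a, HasQuadraticSupportAt f 0 a x :=
    exists_hasQuadraticSupportAt_of_strongConvexOn (strongConvexOn_zero.mpr hf) hc x
  refine ⟨fun x ↦ ?_, LipschitzWith.ae_differentiableAt (C := κ) <| lipschitzOnWith_univ.mp <|
    lipschitzOnWith_gradient_of_strongConcaveOn (mod_cast hκ) hf' hc fun x _ ↦ hsupport x⟩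
  obtain ⟨a, ha⟩ := hsupport x
  exact (ha.hasGradientAt_of_strongConcaveOn hf' hc).differentiableAt.hasGradientAt

/- The function squeezed between `f₁` and the `κ`-concave majorants is `C^{1,1}`, hence twice
differentiable at almost every point, in particular at some contact point. -/
theorem exists_hasUpperJetAt_of_forall_contact (hκ : 0 < κ) (hρ : 0 < ρ)
    (hf₁ : ConvexOn ℝ univ f₁) (hf₂ : ConvexOn ℝ univ f₂)
    (hψ : ψ = fun y ↦ κ / 2 * ‖y‖ ^ 2 - (f₁ y + f₂ y))
    (hcontact : ∀ a ∈ ball 0 ρ, ∃ x, HasQuadraticSupportAt ψ 0 a x) :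
    ∃ x, ∃ a ∈ ball 0 ρ, ∃ (p : E) (A : E →L[ℝ] E), HasQuadraticSupportAt ψ 0 a x ∧
      (A : E →ₗ[ℝ] E).IsSymmetric ∧ HasUpperJetAt f₁ p A x ∧
      HasUpperJetAt f₂ (κ • x - p - a) (κ • ContinuousLinearMap.id ℝ E - A) x := by
  borelize E
  have := isAddHaarMeasure_hausdorffMeasure (E := E)
  obtain ⟨G, hfG, hG, hG', hGw⟩ := exists_convexOn_strongConcaveOn_between_of_contact hf₁ hf₂ hψ
    ⟨0, hcontact 0 (mem_ball_self hρ)⟩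
  obtain ⟨hgrad, hae⟩ := ae_differentiableAt_gradient_of_strongConcaveOn
    (μ := μH[Module.finrank ℝ E]) hκ hG hG'
  have hpos : 0 < μH[Module.finrank ℝ E] {x | ∃ a ∈ ball 0 ρ, HasQuadraticSupportAt ψ 0 a x} := by
    refine hausdorffMeasure_contactSet_pos hκ hρ ?_ ?_ hcontact
    · exact hψ ▸ strongConcaveOn_mul_norm_sq_sub (hf₁.add hf₂)
    · have := hf₁.locallyLipschitz.continuous
      have := hf₂.locallyLipschitz.continuous
      rw [hψ]
      fun_prop
  obtain ⟨x, ⟨a, ha, hax⟩, hx⟩ :=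
    ((frequently_ae_mem_iff.mpr hpos.ne').and_eventually hae).exists
  have hjet := isLittleO_of_hasFDerivAt_gradient (.of_forall hgrad) hx.hasFDerivAt
  refine ⟨x, a, ha, gradient G x, fderiv ℝ (gradient G) x, hax,
    isSymmetric_of_hasFDerivAt_gradient (.of_forall hgrad) hx.hasFDerivAt, ?_⟩
  have hGx : G x = f₁ x := le_antisymm (by linarith [hGw a x hax x, congr_fun hψ x]) (hfG x)
  refine ⟨fun η hη ↦ ?_, fun η hη ↦ ?_⟩ <;> filter_upwards [hjet.def hη] with k hk <;>
    rw [Real.norm_of_nonneg (sq_nonneg ‖k‖), Real.norm_eq_abs, abs_le, hGx] at hk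
  · linarith [hfG (x + k)]
  · have hwk := hGw a x hax (x + k)
    simp only [hψ, inner_add_right, norm_add_sq_real] at hwk
    simp only [inner_sub_left, real_inner_smul_left, sub_apply, smul_apply,
      ContinuousLinearMap.id_apply, real_inner_self_eq_norm_sq]
    linarith

end ContactSet

theorem exists_submodule_le_finrank_eq {K M : Type*} [DivisionRing K] [AddCommGroup M] [Module K M]
    {V : Submodule K M} {d : ℕ} (hd : d ≤ Module.finrank K V) :
    ∃ W ≤ V, Module.finrank K W = d := by
  obtain ⟨b, hb⟩ := exists_linearIndependent_of_le_finrank hd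
  refine ⟨Submodule.span K (range (V.subtype ∘ b)), Submodule.span_le.mpr ?_, ?_⟩
  · rintro _ ⟨i, rfl⟩
    exact (b i).2
  · rw [finrank_span_eq_card (hb.map' V.subtype V.ker_subtype), Fintype.card_fin]

section QuadraticForm

open scoped RealInnerProductSpace

variable {E : Type*} [NormedAddCommGroup E] [InnerProductSpace ℝ E] [FiniteDimensional ℝ E]
  {T : E →ₗ[ℝ] E}

theorem inner_apply_self_eq_sum_eigenvalues (hT : T.IsSymmetric) (k : E) :
    ⟪T k, k⟫ = ∑ i, hT.eigenvalues rfl i * ⟪hT.eigenvectorBasis rfl i, k⟫ ^ 2 := by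
  rw [← (hT.eigenvectorBasis rfl).sum_inner_mul_inner]
  refine Finset.sum_congr rfl fun i _ ↦ ?_
  rw [hT, hT.apply_eigenvectorBasis, inner_smul_right, real_inner_comm, sq, mul_assoc]
  rfl

theorem exists_submodule_inner_apply_self_le (hT : T.IsSymmetric) (c : ℝ) :
    ∃ V : Submodule ℝ E, (∀ k ∈ V, ⟪T k, k⟫ ≤ c * ‖k‖ ^ 2) ∧
      ∀ k ∈ Vᗮ, c * ‖k‖ ^ 2 ≤ ⟪T k, k⟫ := by
  set b := hT.eigenvectorBasis rfl
  have hsum (k : E) : ⟪T k, k⟫ - c * ‖k‖ ^ 2 = ∑ i, (hT.eigenvalues rfl i - c) * ⟪b i, k⟫ ^ 2 := by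
    rw [inner_apply_self_eq_sum_eigenvalues hT, ← b.sum_sq_inner_right k, Finset.mul_sum,
      ← Finset.sum_sub_distrib]
    simp only [sub_mul, b]
  set S : Set E := b '' {i | c < hT.eigenvalues rfl i}
  refine ⟨(Submodule.span ℝ S)ᗮ, fun k hk ↦ ?_, fun k hk ↦ ?_⟩
  · rw [← sub_nonpos, hsum]
    refine Finset.sum_nonpos fun i _ ↦ ?_
    rcases le_or_gt (hT.eigenvalues rfl i) c with hi | hi
    · exact mul_nonpos_of_nonpos_of_nonneg (sub_nonpos.mpr hi) (sq_nonneg _)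
    · rw [hk (b i) (Submodule.subset_span ⟨i, hi, rfl⟩)]
      simp
  · rw [Submodule.orthogonal_orthogonal] at hk
    rw [← sub_nonneg, hsum]
    refine Finset.sum_nonneg fun i _ ↦ ?_
    rcases le_or_gt (hT.eigenvalues rfl i) c with hi | hi
    · have hS : S ⊆ (ℝ ∙ b i)ᗮ := by
        rintro _ ⟨j, hj, rfl⟩
        rw [SetLike.mem_coe, Submodule.mem_orthogonal_singleton_iff_inner_right]
        exact b.orthonormal.2 fun hij ↦ hi.not_gt (hij ▸ hj)
      rw [Submodule.mem_orthogonal_singleton_iff_inner_right.mp (Submodule.span_le.mpr hS hk)]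
      simp
    · exact mul_nonneg (sub_nonneg.mpr hi.le) (sq_nonneg _)

theorem exists_submodule_finrank_eq_or_finrank_eq (hT : T.IsSymmetric) (c : ℝ) {d₁ d₂ : ℕ}
    (hd : d₁ + d₂ ≤ Module.finrank ℝ E + 1) :
    (∃ V : Submodule ℝ E, Module.finrank ℝ V = d₁ ∧ ∀ k ∈ V, ⟪T k, k⟫ ≤ c * ‖k‖ ^ 2) ∨
      ∃ V : Submodule ℝ E, Module.finrank ℝ V = d₂ ∧ ∀ k ∈ V, c * ‖k‖ ^ 2 ≤ ⟪T k, k⟫ := by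
  obtain ⟨V, hV, hV'⟩ := exists_submodule_inner_apply_self_le hT c
  have hrank := V.finrank_add_finrank_orthogonal
  rcases le_or_gt d₁ (Module.finrank ℝ V) with hd₁ | hd₁
  · obtain ⟨W, hWV, hW⟩ := exists_submodule_le_finrank_eq hd₁
    exact .inl ⟨W, hW, fun k hk ↦ hV k (hWV hk)⟩
  · obtain ⟨W, hWV, hW⟩ := exists_submodule_le_finrank_eq (show d₂ ≤ Module.finrank ℝ Vᗮ by lia)
    exact .inr ⟨W, hW, fun k hk ↦ hV' k (hWV hk)⟩

end QuadraticForm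

section SupConvolution

open scoped RealInnerProductSpace Topology

/-- On some `m`-dimensional affine subspace through `x`, the function `u` is bounded near `x` by a
strictly concave quadratic polynomial that agrees with `u` at `x`. This is the local obstruction to
real `(m - 1)`-convexity. -/
def HasConcaveTouch {E : Type*} [NormedAddCommGroup E] [NormedSpace ℝ E] (m : ℕ) (u : E → EReal)
    (x : E) : Prop :=
  ∃ g : ℝ, u x = g ∧ ∃ V : Submodule ℝ E, Module.finrank ℝ V = m ∧ ∃ l : E →ₗ[ℝ] ℝ, ∃ c > 0,
    ∀ᶠ k in 𝓝 0, k ∈ V → u (x + k) ≤ ((g + l k - c * ‖k‖ ^ 2 : ℝ) : EReal)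

variable {E : Type*} [NormedAddCommGroup E] [InnerProductSpace ℝ E] {v : E → EReal} {B : Set E}
  {t : ℝ} {f : E → ℝ} {x z : E}

/-- The paraboloid `z ↦ (f x - t / 2 * ‖x‖ ^ 2) + t / 2 * ‖z - x‖ ^ 2` with vertex over `x`, with
the square expanded. -/
def paraboloid (f : E → ℝ) (t : ℝ) (x z : E) : ℝ :=
  f x - t * ⟪x, z⟫ + t / 2 * ‖z‖ ^ 2

/-- `f` is the convexified sup-convolution of `v` over `B`: the function
`x ↦ f x - t / 2 * ‖x‖ ^ 2` is the attained supremum of `v z - t / 2 * ‖x - z‖ ^ 2` over `z ∈ B`.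
Equivalently, each paraboloid of `f` lies above `v` on `B` and touches it there. -/
structure IsSupConvolution (v : E → EReal) (B : Set E) (t : ℝ) (f : E → ℝ) : Prop where
  le : ∀ x, ∀ z ∈ B, v z ≤ paraboloid f t x z
  exists_eq : ∀ x, ∃ z ∈ B, v z = paraboloid f t x z

theorem exists_isSupConvolution (hB : IsCompact B) (hv : UpperSemicontinuousOn v B)
    (htop : ∀ z ∈ B, v z ≠ ⊤) (hbot : ∃ z ∈ B, v z ≠ ⊥) (t : ℝ) :
    ∃ f, IsSupConvolution v B t f := by
  have hmax (x : E) : ∃ y : ℝ,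
      (∀ z ∈ B, v z ≤ ((y - t * ⟪x, z⟫ + t / 2 * ‖z‖ ^ 2 : ℝ) : EReal)) ∧
      ∃ z ∈ B, v z = ((y - t * ⟪x, z⟫ + t / 2 * ‖z‖ ^ 2 : ℝ) : EReal) := by
    let φ (z : E) : ℝ := t * ⟪x, z⟫ - t / 2 * ‖z‖ ^ 2
    have hφ : Continuous fun z ↦ (φ z : EReal) :=
      continuous_coe_real_ereal.comp (by fun_prop)
    have husc : UpperSemicontinuousOn (fun z ↦ v z + φ z) B :=
      hv.add' (hφ.upperSemicontinuous.upperSemicontinuousOn B) fun z _ ↦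
        EReal.continuousAt_add (.inr (EReal.coe_ne_bot _)) (.inr (EReal.coe_ne_top _))
    obtain ⟨z₁, hz₁, hbot₁⟩ := hbot
    obtain ⟨z, hz, hzmax⟩ := husc.exists_isMaxOn ⟨z₁, hz₁⟩ hB
    have hzbot : v z ≠ ⊥ := fun h ↦ by
      have := hzmax hz₁
      simp [h, EReal.add_eq_bot_iff, hbot₁] at this
    lift v z to ℝ using ⟨htop z hz, hzbot⟩ with g hg
    refine ⟨g + φ z, fun w hw ↦ ?_, z, hz, ?_⟩
    · have hwz : v w ≤ v z + φ z - φ w :=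
        EReal.le_sub_iff_add_le (.inl (EReal.coe_ne_bot _)) (.inl (EReal.coe_ne_top _))
          |>.mpr (hzmax hw)
      rw [← hg] at hwz
      refine hwz.trans (le_of_eq ?_)
      norm_cast
      simp only [φ]
      ring
    · rw [← hg]
      norm_cast
      simp only [φ]
      ring
  choose f hf using hmax
  exact ⟨f, fun x ↦ (hf x).1, fun x ↦ (hf x).2⟩

theorem convexOn_univ_of_forall_hasQuadraticSupportAt
    (h : ∀ x, ∃ p, HasQuadraticSupportAt f 0 p x) : ConvexOn ℝ univ f := by
  refine ⟨convex_univ, fun x _ y _ a b ha hb hab ↦ ?_⟩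
  obtain ⟨p, hp⟩ := h (a • x + b • y)
  have hx : a * (f (a • x + b • y) + ⟪p, x - (a • x + b • y)⟫) ≤ a * f x := by
    gcongr
    simpa using hp x
  have hy : b * (f (a • x + b • y) + ⟪p, y - (a • x + b • y)⟫) ≤ b * f y := by
    gcongr
    simpa using hp y
  simp only [inner_sub_right, inner_add_right, real_inner_smul_right, smul_eq_mul] at hx hy ⊢
  linear_combination hx + hy + (⟪p, x⟫ * a + ⟪p, y⟫ * b - f (a • x + b • y)) * hab

namespace IsSupConvolution

theorem hasQuadraticSupportAt (hf : IsSupConvolution v B t f) (hz : z ∈ B)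
    (hzx : v z = paraboloid f t x z) :
    HasQuadraticSupportAt f 0 (t • z) x := fun y ↦ by
  have hy := hf.le y z hz
  rw [hzx, EReal.coe_le_coe_iff, paraboloid, paraboloid] at hy
  rw [real_inner_smul_left, inner_sub_right, real_inner_comm, real_inner_comm x]
  linarith

theorem convexOn (hf : IsSupConvolution v B t f) : ConvexOn ℝ univ f :=
  convexOn_univ_of_forall_hasQuadraticSupportAt fun x ↦ by
    obtain ⟨z, hz, hzx⟩ := hf.exists_eq x
    exact ⟨_, hf.hasQuadraticSupportAt hz hzx⟩

theorem le_add_mul_norm (hf : IsSupConvolution v B t f) {R : ℝ} (ht : 0 ≤ t)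
    (hB : B ⊆ closedBall 0 R) (x : E) :
    f x ≤ f 0 + t * R * ‖x‖ := by
  obtain ⟨z, hz, hzx⟩ := hf.exists_eq x
  have h0 := hf.hasQuadraticSupportAt hz hzx 0
  have hzR : ⟪z, x⟫ ≤ R * ‖x‖ := (real_inner_le_norm z x).trans <| by
    gcongr
    simpa using hB hz
  rw [zero_sub, inner_neg_right, real_inner_smul_left] at h0
  linear_combination h0 + t * hzR

theorem hasConcaveTouch (hf : IsSupConvolution v B t f) {m : ℕ} {c : ℝ} {p : E}
    {A : E →L[ℝ] E} {V : Submodule ℝ E} (hBz : B ∈ 𝓝 z) (hzx : v z = paraboloid f t x z)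
    (hjet : HasUpperJetAt f p A x) (hV : Module.finrank ℝ V = m)
    (hA : ∀ k ∈ V, ⟪A k, k⟫ ≤ c * ‖k‖ ^ 2) (hct : c < t) : HasConcaveTouch m v z := by
  refine ⟨_, hzx, V, hV, (innerSL ℝ (p - t • x)).toLinearMap, (t - c) / 4, by linarith, ?_⟩
  have hadd : Tendsto (z + ·) (𝓝 0) (𝓝 z) := by
    simpa using (continuous_const_add z).tendsto 0
  filter_upwards [hjet ((t - c) / 4) (by linarith), hadd.eventually_mem hBz] with k hk hkB hkV
  -- the paraboloid over `z + k` is compared at the translated point `x + k`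
  refine (hf.le (x + k) (z + k) hkB).trans (EReal.coe_le_coe_iff.mpr ?_)
  simp only [paraboloid, ContinuousLinearMap.coe_coe, innerSL_apply_apply, inner_sub_left,
    inner_add_left, inner_add_right, real_inner_smul_left, norm_add_sq_real,
    real_inner_self_eq_norm_sq, real_inner_comm z k]
  linarith [hA k hkV]

end IsSupConvolution

end SupConvolution

section Localization

open scoped Topology

theorem exists_pos_forall_lt_sub_of_upperSemicontinuousOn {X : Type*} [PseudoMetricSpace X]
    {G : X × X → EReal} {h : X → ℝ} {B K : Set X} (hG : UpperSemicontinuousOn G (B ×ˢ B))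
    (hK : IsCompact K) (hKB : K ⊆ B) (hh : Continuous h) (hlt : ∀ y ∈ K, G (y, y) < h y) :
    ∃ ε > 0, ∀ y ∈ K, ∀ z ∈ B, ∀ w ∈ B, ∀ x, dist z y < ε → dist w y < ε → dist x y < ε →
      G (z, w) < ((h x - ε : ℝ) : EReal) := by
  let ι (y : X) : (X × X) × X × ℝ := ((y, y), y, 0)
  have hι : IsCompact (ι '' K) := hK.image (by fun_prop)
  have hmem : {p : (X × X) × X × ℝ | p.1 ∈ B ×ˢ B → G p.1 < ((h p.2.1 - p.2.2 : ℝ) : EReal)} ∈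
      𝓝ˢ (ι '' K) := by
    rw [mem_nhdsSet_iff_forall, forall_mem_image]
    intro y hy
    obtain ⟨b, hGb, hbh⟩ := EReal.lt_iff_exists_real_btwn.mp (hlt y hy)
    have hG' : ∀ᶠ p in 𝓝 (ι y), p.1 ∈ B ×ˢ B → G p.1 < b :=
      (continuous_fst.tendsto (ι y)).eventually
        (eventually_nhdsWithin_iff.mp (hG (y, y) ⟨hKB hy, hKB hy⟩ b hGb))
    have hh' : ∀ᶠ p in 𝓝 (ι y), b < h p.2.1 - p.2.2 :=
      continuousAt_const.eventually_lt
        (Continuous.continuousAt (f := fun p : (X × X) × X × ℝ ↦ h p.2.1 - p.2.2) (by fun_prop))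
        (by simpa [ι] using hbh)
    filter_upwards [hG', hh'] with p hpG hph hpB
    exact (hpG hpB).trans (EReal.coe_lt_coe_iff.mpr hph)
  obtain ⟨ε, hε, hsub⟩ := (hasBasis_nhdsSet_thickening hι).mem_iff.mp hmem
  refine ⟨ε / 2, by positivity, fun y hy z hz w hw x hzy hwy hxy ↦ ?_⟩
  refine @hsub ((z, w), x, ε / 2) (mem_thickening_iff.mpr ⟨ι y, mem_image_of_mem ι hy, ?_⟩) ⟨hz, hw⟩
  have hε2 : dist (ε / 2) 0 < ε := by
    rw [dist_zero_right, Real.norm_of_nonneg (by positivity)]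
    linarith
  simp only [ι, Prod.dist_eq, max_lt_iff]
  exact ⟨⟨by linarith, by linarith⟩, by linarith, hε2⟩

theorem exists_real_forall_le_of_upperSemicontinuousOn {X : Type*} [TopologicalSpace X]
    {v : X → EReal} {K : Set X} (hK : IsCompact K) (hv : UpperSemicontinuousOn v K)
    (htop : ∀ z ∈ K, v z ≠ ⊤) : ∃ M : ℝ, ∀ z ∈ K, v z ≤ M := by
  rcases K.eq_empty_or_nonempty with rfl | hne
  · exact ⟨0, fun z hz ↦ hz.elim⟩
  · obtain ⟨z, hz, hmax⟩ := hv.exists_isMaxOn hne hK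
    exact ⟨_, fun w hw ↦ (hmax hw).trans (EReal.le_coe_toReal (htop z hz))⟩

theorem lt_of_mul_sq_le_of_lt {s C d ε : ℝ} (hs : 0 ≤ s) (hε : 0 ≤ ε) (hd : s * d ^ 2 ≤ C)
    (hC : C < s * ε ^ 2) : d < ε :=
  lt_of_pow_lt_pow_left₀ 2 hε (lt_of_mul_lt_mul_left (hd.trans_lt hC) hs)

/- A large `t` forces `x` to be near both `z` and `w`, since the right-hand side of the hypothesis
grows at most like `(δ + 1) * ‖x - z‖ ^ 2`; a small `ρ` then makes `‖a‖ * ‖x - y‖` small. -/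
theorem exists_penalization_parameters {E : Type*} [SeminormedAddCommGroup E] (C : ℝ) {δ R ε : ℝ}
    (hδ : 0 < δ) (hR : 0 ≤ R) (hε : 0 < ε) :
    ∃ t > δ, ∃ ρ > 0, ∀ a x y z w : E, ‖a‖ < ρ → ‖y‖ ≤ R → ‖z‖ ≤ R →
      t / 2 * ‖x - z‖ ^ 2 + t / 2 * ‖x - w‖ ^ 2 ≤ C + δ / 2 * ‖x‖ ^ 2 + ‖a‖ * ‖x - y‖ →
      ‖x - z‖ < ε ∧ ‖x - w‖ < ε ∧ ‖a‖ * ‖x - y‖ < ε := by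
  set C' := C + δ * R ^ 2 + 2 * R + 1 with hC'
  set s := (|C'| + 1) / ε ^ 2 with hs
  have hs0 : 0 ≤ s := by positivity
  have hsε : C' < s * ε ^ 2 := by
    rw [hs, div_mul_cancel₀ _ (by positivity)]
    linarith [le_abs_self C']
  refine ⟨2 * (δ + 1 + s), by linarith, min 1 (ε / (ε + 2 * R)), by positivity,
    fun a x y z w ha hy hz hle ↦ ?_⟩
  obtain ⟨ha₁, haε⟩ := lt_min_iff.mp ha
  have hx : ‖x‖ ≤ ‖x - z‖ + R := (norm_le_norm_sub_add x z).trans (by gcongr)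
  have hxy : ‖x - y‖ ≤ ‖x - z‖ + 2 * R := by
    linarith [norm_sub_le_norm_sub_add_norm_sub x z y, norm_sub_le z y]
  have hx2 : δ / 2 * ‖x‖ ^ 2 ≤ δ * (‖x - z‖ ^ 2 + R ^ 2) :=
    calc δ / 2 * ‖x‖ ^ 2 ≤ δ / 2 * (‖x - z‖ + R) ^ 2 := by gcongr
      _ ≤ δ / 2 * (2 * (‖x - z‖ ^ 2 + R ^ 2)) := by gcongr; exact add_sq_le
      _ = δ * (‖x - z‖ ^ 2 + R ^ 2) := by ring
  have haxy : ‖a‖ * ‖x - y‖ ≤ ‖x - z‖ ^ 2 + 1 + 2 * R :=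
    calc ‖a‖ * ‖x - y‖ ≤ 1 * (‖x - z‖ + 2 * R) := by gcongr
      _ ≤ ‖x - z‖ ^ 2 + 1 + 2 * R := by linarith [sq_nonneg (‖x - z‖ - 1), sq_nonneg ‖x - z‖]
  have hsum : s * ‖x - z‖ ^ 2 + s * ‖x - w‖ ^ 2 + (δ + 1) * ‖x - w‖ ^ 2 ≤ C' := by
    linarith [hC']
  have hw : 0 ≤ (δ + 1) * ‖x - w‖ ^ 2 := by positivity
  have hxz : ‖x - z‖ < ε := lt_of_mul_sq_le_of_lt hs0 hε.le
    (by linarith [hsum, mul_nonneg hs0 (sq_nonneg ‖x - w‖)]) hsε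
  refine ⟨hxz, lt_of_mul_sq_le_of_lt hs0 hε.le
    (by linarith [hsum, mul_nonneg hs0 (sq_nonneg ‖x - z‖)]) hsε, ?_⟩
  calc ‖a‖ * ‖x - y‖ ≤ ‖a‖ * (ε + 2 * R) := by gcongr; linarith
    _ < ε / (ε + 2 * R) * (ε + 2 * R) := by gcongr
    _ = ε := div_mul_cancel₀ _ (by positivity)

/- The bound `G (z, w) < g - δ / 2 * ‖z‖ ^ 2` on the diagonal over `B \ U` persists near that
diagonal, while the penalization keeps `(x, z, w)` near the diagonal. -/
theorem exists_parameters_forall_mem_of_le {E : Type*} [NormedAddCommGroup E] {B U : Set E}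
    {G : E × E → EReal} (hB : IsCompact B) (hU : IsOpen U)
    (hG : UpperSemicontinuousOn G (B ×ˢ B)) (htop : ∀ p ∈ B ×ˢ B, G p ≠ ⊤)
    (hbd : ∀ z ∈ B \ U, G (z, z) ≤ 0) {g : ℝ} (hg : 0 < g) :
    ∃ δ > 0, ∃ t > δ, ∃ ρ > 0, ∀ a ∈ ball (0 : E) ρ, ∀ x, ∀ y ∈ B, ∀ z ∈ B, ∀ w ∈ B, ∀ b : ℝ,
      G (z, w) = b → g + t / 2 * ‖x - z‖ ^ 2 + t / 2 * ‖x - w‖ ^ 2 ≤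
        b + δ / 2 * ‖x‖ ^ 2 + ‖a‖ * ‖x - y‖ → z ∈ U ∧ w ∈ U := by
  obtain ⟨R, hR, hBR⟩ := hB.isBounded.exists_pos_norm_le
  obtain ⟨M, hM⟩ := exists_real_forall_le_of_upperSemicontinuousOn (hB.prod hB) hG htop
  set δ := g / R ^ 2
  have hδ : 0 < δ := by positivity
  have hδR : δ * R ^ 2 = g := div_mul_cancel₀ _ (by positivity)
  have hlt : ∀ z ∈ B \ U, G (z, z) < ((g - δ / 2 * ‖z‖ ^ 2 : ℝ) : EReal) := fun z hz ↦ by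
    refine (hbd z hz).trans_lt (EReal.coe_pos.mpr ?_)
    have : δ / 2 * ‖z‖ ^ 2 ≤ δ / 2 * R ^ 2 := by gcongr; exact hBR z hz.1
    linarith
  obtain ⟨ε, hε, hnear⟩ := exists_pos_forall_lt_sub_of_upperSemicontinuousOn hG (hB.diff hU)
    sdiff_subset (by fun_prop) hlt
  obtain ⟨t, hδt, ρ, hρ, hclose⟩ :=
    exists_penalization_parameters (E := E) (M - g) hδ hR.le (half_pos hε)
  refine ⟨δ, hδ, t, hδt, ρ, hρ, fun a ha x y hy z hz w hw b hb hle ↦ ?_⟩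
  have hbM : b ≤ M := EReal.coe_le_coe_iff.mp (hb ▸ hM (z, w) ⟨hz, hw⟩)
  obtain ⟨hxz, hxw, hay⟩ := hclose a x y z w (mem_ball_zero_iff.mp ha) (hBR y hy) (hBR z hz)
    (by linarith)
  have hge : ((g - δ / 2 * ‖x‖ ^ 2 - ε : ℝ) : EReal) ≤ G (z, w) := by
    have ht : 0 < t := hδ.trans hδt
    have hz0 : 0 ≤ t / 2 * ‖x - z‖ ^ 2 := by positivity
    have hw0 : 0 ≤ t / 2 * ‖x - w‖ ^ 2 := by positivity
    rw [hb, EReal.coe_le_coe_iff]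
    linarith
  rw [← dist_eq_norm] at hxz hxw
  have hzw : dist z w < ε := by linarith [dist_triangle_left z w x]
  constructor <;> by_contra hU'
  · exact (hnear z ⟨hz, hU'⟩ z hz w hw x (by simpa) (by rwa [dist_comm]) (by linarith)).not_ge hge
  · exact (hnear w ⟨hw, hU'⟩ z hz w hw x hzw (by simpa) (by linarith)).not_ge hge

end Localization

section MaximumPrinciple

open scoped RealInnerProductSpace Topology

variable {E : Type*} [NormedAddCommGroup E] [InnerProductSpace ℝ E] {v₁ v₂ : E → EReal}
  {B U : Set E} {t δ ρ : ℝ} {f₁ f₂ : E → ℝ} {m₁ m₂ : ℕ}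

theorem exists_forall_mul_sub_le_mul_sq {κ : ℝ} (hκ : 0 < κ) (L : ℝ) :
    ∃ D, ∀ s, L * s - D ≤ κ / 2 * s ^ 2 := by
  refine ⟨L ^ 2 / (2 * κ), fun s ↦ ?_⟩
  have hsq : κ / 2 * s ^ 2 - (L * s - L ^ 2 / (2 * κ)) = (κ * s - L) ^ 2 / (2 * κ) := by
    field_simp
    ring
  rw [← sub_nonneg, hsq]
  positivity

theorem IsSupConvolution.exists_hasConcaveTouch [FiniteDimensional ℝ E]
    (hm : m₁ + m₂ ≤ Module.finrank ℝ E + 1) (hf₁ : IsSupConvolution v₁ B t f₁)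
    (hf₂ : IsSupConvolution v₂ B t f₂) (hB : Bornology.IsBounded B) (hU : IsOpen U) (hUB : U ⊆ B)
    (hδ : 0 < δ) (hδt : δ < t) (hρ : 0 < ρ) {ψ : E → ℝ}
    (hψ : ψ = fun y ↦ (2 * t - δ) / 2 * ‖y‖ ^ 2 - (f₁ y + f₂ y))
    (hloc : ∀ a ∈ ball 0 ρ, ∀ x, HasQuadraticSupportAt ψ 0 a x →
      ∀ z ∈ B, v₁ z = paraboloid f₁ t x z → ∀ w ∈ B, v₂ w = paraboloid f₂ t x w →
        z ∈ U ∧ w ∈ U) :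
    ∃ z ∈ U, HasConcaveTouch m₁ v₁ z ∨ HasConcaveTouch m₂ v₂ z := by
  obtain ⟨R, hR⟩ := hB.subset_closedBall 0
  have ht : 0 < t := hδ.trans hδt
  have hψc : Continuous ψ := by
    have hc₁ := hf₁.convexOn.locallyLipschitz.continuous
    have hc₂ := hf₂.convexOn.locallyLipschitz.continuous
    rw [hψ]
    fun_prop
  have hψgrowth (C : ℝ) : ∃ D, ∀ y, C * ‖y‖ - D ≤ ψ y := by
    obtain ⟨D, hD⟩ := exists_forall_mul_sub_le_mul_sq (by linarith : 0 < 2 * t - δ) (C + 2 * t * R)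
    refine ⟨D + (f₁ 0 + f₂ 0), fun y ↦ ?_⟩
    rw [hψ]
    linarith [hD ‖y‖, hf₁.le_add_mul_norm ht.le hR y, hf₂.le_add_mul_norm ht.le hR y]
  obtain ⟨x, a, ha, p, A, hxa, hA, hjet₁, hjet₂⟩ :=
    exists_hasUpperJetAt_of_forall_contact (by linarith) hρ hf₁.convexOn hf₂.convexOn hψ
      fun a _ ↦ exists_hasQuadraticSupportAt_of_superlinear hψc hψgrowth a
  obtain ⟨z, hz, hzx⟩ := hf₁.exists_eq x
  obtain ⟨w, hw, hwx⟩ := hf₂.exists_eq x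
  obtain ⟨hzU, hwU⟩ := hloc a ha x hxa z hz hzx w hw hwx
  rcases exists_submodule_finrank_eq_or_finrank_eq hA (t - δ / 2) hm with
    ⟨V, hV, hAV⟩ | ⟨V, hV, hAV⟩
  · exact ⟨z, hzU, .inl <| hf₁.hasConcaveTouch (mem_of_superset (hU.mem_nhds hzU) hUB) hzx hjet₁ hV
      hAV (by linarith)⟩
  · refine ⟨w, hwU, .inr <| hf₂.hasConcaveTouch (mem_of_superset (hU.mem_nhds hwU) hUB) hwx hjet₂ hV
      (c := t - δ / 2) (fun k hk ↦ ?_) (by linarith)⟩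
    have hAk : (t - δ / 2) * ‖k‖ ^ 2 ≤ ⟪A k, k⟫ := hAV k hk
    simp only [sub_apply, smul_apply, ContinuousLinearMap.id_apply, inner_sub_left,
      real_inner_smul_left, real_inner_self_eq_norm_sq]
    linarith

theorem IsSupConvolution.add_mul_norm_sub_sq_le (hf₁ : IsSupConvolution v₁ B t f₁)
    (hf₂ : IsSupConvolution v₂ B t f₂) {ψ : E → ℝ}
    (hψ : ψ = fun y ↦ (2 * t - δ) / 2 * ‖y‖ ^ 2 - (f₁ y + f₂ y)) {a x y : E}
    (hx : HasQuadraticSupportAt ψ 0 a x) (hy : y ∈ B) {g₁ g₂ : ℝ} (hg₁ : v₁ y = g₁)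
    (hg₂ : v₂ y = g₂) (z w : E) :
    g₁ + g₂ + δ / 2 * ‖y‖ ^ 2 + t / 2 * ‖x - z‖ ^ 2 + t / 2 * ‖x - w‖ ^ 2 ≤
      paraboloid f₁ t x z + paraboloid f₂ t x w + δ / 2 * ‖x‖ ^ 2 + ‖a‖ * ‖x - y‖ := by
  have h₁ := hf₁.le y y hy
  have h₂ := hf₂.le y y hy
  have ha : ⟪a, x - y⟫ ≤ ‖a‖ * ‖x - y‖ := real_inner_le_norm a (x - y)
  have hxy := hx y
  rw [hg₁, EReal.coe_le_coe_iff] at h₁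
  rw [hg₂, EReal.coe_le_coe_iff] at h₂
  rw [← neg_sub x y, inner_neg_right, hψ] at hxy
  simp only [paraboloid, real_inner_self_eq_norm_sq, norm_sub_sq_real] at h₁ h₂ hxy ⊢
  linarith

theorem exists_hasConcaveTouch_of_pos [FiniteDimensional ℝ E]
    (hm : m₁ + m₂ ≤ Module.finrank ℝ E + 1) (hB : IsCompact B) (hU : IsOpen U) (hUB : U ⊆ B)
    (hv₁ : UpperSemicontinuousOn v₁ B) (hv₂ : UpperSemicontinuousOn v₂ B)
    (htop₁ : ∀ z ∈ B, v₁ z ≠ ⊤) (htop₂ : ∀ z ∈ B, v₂ z ≠ ⊤)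
    (hbd : ∀ z ∈ B \ U, v₁ z + v₂ z ≤ 0) {y : E} (hy : y ∈ B) (hpos : 0 < v₁ y + v₂ y) :
    ∃ z ∈ U, HasConcaveTouch m₁ v₁ z ∨ HasConcaveTouch m₂ v₂ z := by
  have hbot₁ : v₁ y ≠ ⊥ := fun h ↦ by simp [h] at hpos
  have hbot₂ : v₂ y ≠ ⊥ := fun h ↦ by simp [h] at hpos
  have hg₁ := (EReal.coe_toReal (htop₁ y hy) hbot₁).symm
  have hg₂ := (EReal.coe_toReal (htop₂ y hy) hbot₂).symm
  rw [hg₁, hg₂, ← EReal.coe_add, EReal.coe_pos] at hpos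
  have hG : UpperSemicontinuousOn (fun p : E × E ↦ v₁ p.1 + v₂ p.2) (B ×ˢ B) :=
    (hv₁.comp continuousOn_fst fun _ hp ↦ hp.1).add' (hv₂.comp continuousOn_snd fun _ hp ↦ hp.2)
      fun p hp ↦ EReal.continuousAt_add (.inl (htop₁ _ hp.1)) (.inr (htop₂ _ hp.2))
  obtain ⟨δ, hδ, t, hδt, ρ, hρ, hmem⟩ := exists_parameters_forall_mem_of_le hB hU hG
    (fun p hp ↦ EReal.add_ne_top (htop₁ _ hp.1) (htop₂ _ hp.2)) hbd hpos
  obtain ⟨f₁, hf₁⟩ := exists_isSupConvolution hB hv₁ htop₁ ⟨y, hy, hbot₁⟩ t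
  obtain ⟨f₂, hf₂⟩ := exists_isSupConvolution hB hv₂ htop₂ ⟨y, hy, hbot₂⟩ t
  refine hf₁.exists_hasConcaveTouch hm hf₂ hB.isBounded hU hUB hδ hδt hρ rfl
    fun a ha x hx z hz hzx w hw hwx ↦ hmem a ha x y hy z hz w hw
      (paraboloid f₁ t x z + paraboloid f₂ t x w) (by simp [hzx, hwx]) ?_
  have hy0 : 0 ≤ δ / 2 * ‖y‖ ^ 2 := by positivity
  linarith [hf₁.add_mul_norm_sub_sq_le hf₂ rfl hx hy hg₁ hg₂ z w]

end MaximumPrinciple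

section ConcaveTouch

open scoped Topology

variable {E F : Type*} [NormedAddCommGroup E] [NormedSpace ℝ E] [NormedAddCommGroup F]
  [NormedSpace ℝ F] {q m : ℕ} {u : E → EReal} {ω : Set E} {x : E}

theorem RealQConvexOn.not_hasConcaveTouch (hu : RealQConvexOn q u ω) (hx : ω ∈ 𝓝 x) :
    ¬ HasConcaveTouch (q + 1) u x := by
  rintro ⟨g, hg, V, hV, l, c, hc, htouch⟩
  obtain ⟨s, hs, hball⟩ := nhds_basis_closedBall.mem_iff.mp hx
  obtain ⟨s', hs', hs'V⟩ := nhds_basis_closedBall.eventually_iff.mp htouch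
  set r := min s s' with hr_def
  have hr : 0 < r := lt_min hs hs'
  let a : E →ᵃ[ℝ] ℝ := l.toAffineMap + AffineMap.const ℝ E (g - l x - c * r ^ 2)
  have ha (y : E) : a y = g + l (y - x) - c * r ^ 2 := by
    simp only [a, AffineMap.coe_add, LinearMap.coe_toAffineMap, AffineMap.coe_const, Pi.add_apply,
      Function.const_apply, map_sub]
    ring
  have hsub : closure (ball x r) ⊆ ω :=
    closure_ball_subset_closedBall.trans
      ((closedBall_subset_closedBall (min_le_left _ _)).trans hball)
  have hle := hu.2.2 (AffineSubspace.mk' x V) (by rwa [AffineSubspace.direction_mk']) x r hr hsub a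
    (fun y hy ↦ ?_) x ⟨mem_closedBall_self hr.le, AffineSubspace.self_mem_mk' x V⟩
  · rw [hg, ha, EReal.coe_le_coe_iff, sub_self, map_zero] at hle
    linarith [show 0 < c * r ^ 2 by positivity]
  · have hyr : ‖y - x‖ = r := mem_sphere_iff_norm.mp hy.1
    have hyV : y - x ∈ V := AffineSubspace.mem_mk'.mp hy.2
    have := hs'V (x := y - x) (by simp [hyr, hr_def]) hyV
    rwa [add_sub_cancel, hyr, ← ha] at this

namespace HasConcaveTouch

theorem of_sub_affine {l : E →ᵃ[ℝ] ℝ} (h : HasConcaveTouch m (fun y ↦ u y - l y) x) :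
    HasConcaveTouch m u x := by
  obtain ⟨g, hg, V, hV, p, c, hc, htouch⟩ := h
  refine ⟨g + l x, ?_, V, hV, p + l.linear, c, hc, ?_⟩
  · rw [EReal.coe_add, ← hg, EReal.sub_add_cancel]
  · filter_upwards [htouch] with k hk hkV
    have hl : l (x + k) = l x + l.linear k := by
      rw [add_comm x k, ← vadd_eq_add, l.map_vadd, vadd_eq_add, add_comm]
    have hle := EReal.sub_le_iff_le_add (.inl (EReal.coe_ne_bot _)) (.inl (EReal.coe_ne_top _))
      |>.mp (hk hkV)
    rw [← EReal.coe_add] at hle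
    refine hle.trans (EReal.coe_le_coe_iff.mpr ?_)
    rw [hl, LinearMap.add_apply]
    linarith

theorem of_comp_affineIsometry {ι : F →ᵃⁱ[ℝ] E} {y : F} (h : HasConcaveTouch m (u ∘ ι) y) :
    HasConcaveTouch m u (ι y) := by
  obtain ⟨g, hg, V, hV, l, c, hc, htouch⟩ := h
  let L : F →ₗ[ℝ] E := ι.linearIsometry.toLinearMap
  have hL : Function.Injective L := ι.linearIsometry.injective
  obtain ⟨M, hM⟩ := L.exists_leftInverse_of_injective (LinearMap.ker_eq_bot.mpr hL)
  refine ⟨g, hg, V.map L, (Submodule.equivMapOfInjective L hL V).finrank_eq.symm.trans hV,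
    l ∘ₗ M, c, hc, ?_⟩
  obtain ⟨s, hs, hsV⟩ := nhds_basis_ball.eventually_iff.mp htouch
  filter_upwards [ball_mem_nhds 0 hs]
  rintro _ hk ⟨k, hkV, rfl⟩
  have hMk : M (L k) = k := LinearMap.congr_fun hM k
  have hLk : ‖L k‖ = ‖k‖ := ι.linearIsometry.norm_map k
  have hιk : ι (y + k) = ι y + L k := by
    rw [add_comm y k, ← vadd_eq_add, ι.map_vadd, vadd_eq_add, add_comm]
    rfl
  rw [mem_ball_zero_iff, hLk] at hk
  rw [LinearMap.comp_apply, hMk, hLk, ← hιk]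
  exact hsV (mem_ball_zero_iff.mpr hk) hkV

end HasConcaveTouch

end ConcaveTouch

section Sum

open scoped Topology

theorem RealQConvexOn.add_comp_affineIsometry_le {E F : Type*} [NormedAddCommGroup E]
    [NormedSpace ℝ E] [NormedAddCommGroup F] [InnerProductSpace ℝ F] [FiniteDimensional ℝ F]
    {q r : ℕ} {u₁ u₂ : E → EReal} {ω : Set E} (h₁ : RealQConvexOn q u₁ ω)
    (h₂ : RealQConvexOn r u₂ ω) (hF : q + r + 1 ≤ Module.finrank ℝ F) (ι : F →ᵃⁱ[ℝ] E) {c : E}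
    {ρ : ℝ} (hω : closedBall c ρ ⊆ ω) (l : E →ᵃ[ℝ] ℝ)
    (hl : ∀ x, ι x ∈ sphere c ρ → u₁ (ι x) + u₂ (ι x) ≤ l (ι x)) {y : F}
    (hy : ι y ∈ closedBall c ρ) : u₁ (ι y) + u₂ (ι y) ≤ l (ι y) := by
  set B : Set F := ι ⁻¹' closedBall c ρ
  let lF : F →ᵃ[ℝ] ℝ := l.comp ι.toAffineMap
  have hB : IsCompact B := isCompact_of_isClosed_isBounded
    (isClosed_closedBall.preimage ι.continuous)
    (ι.antilipschitz.isBounded_preimage isBounded_closedBall)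
  have hBω : MapsTo ι B ω := fun x hx ↦ hω hx
  have husc₁ : UpperSemicontinuousOn (u₁ ∘ ι) B := h₁.2.1.comp ι.continuous.continuousOn hBω
  have husc₂ : UpperSemicontinuousOn (fun x ↦ u₂ (ι x) - lF x) B := by
    have hlF : Continuous fun x ↦ ((-lF x : ℝ) : EReal) :=
      continuous_coe_real_ereal.comp lF.continuous_of_finiteDimensional.neg
    exact (h₂.2.1.comp ι.continuous.continuousOn hBω).add'
      (hlF.upperSemicontinuous.upperSemicontinuousOn B) fun z _ ↦
        EReal.continuousAt_add (.inr (EReal.coe_ne_bot _)) (.inr (EReal.coe_ne_top _))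
  have hle_zero (x : F) : u₁ (ι x) + (u₂ (ι x) - lF x) ≤ 0 ↔ u₁ (ι x) + u₂ (ι x) ≤ l (ι x) := by
    rw [sub_eq_add_neg, ← add_assoc, ← sub_eq_add_neg, EReal.sub_nonpos]
    rfl
  have hbd : ∀ z ∈ B \ ι ⁻¹' ball c ρ, u₁ (ι z) + (u₂ (ι z) - lF z) ≤ 0 := fun z hz ↦
    (hle_zero z).mpr (hl z (le_antisymm hz.1 (not_lt.mp hz.2)))
  by_contra hlt
  obtain ⟨z, hz, htouch⟩ := exists_hasConcaveTouch_of_pos (m₁ := q + 1) (m₂ := r + 1)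
    (by omega) hB (isOpen_ball.preimage ι.continuous) (preimage_mono ball_subset_closedBall)
    husc₁ husc₂ (fun z hz ↦ h₁.1 _ (hBω hz))
    (fun z hz ↦ EReal.add_ne_top (h₂.1 _ (hBω hz)) (EReal.coe_ne_top (-lF z))) hbd hy
    (not_le.mp (mt (hle_zero y).mp hlt))
  have hωz : ω ∈ 𝓝 (ι z) :=
    mem_of_superset (isOpen_ball.mem_nhds hz) (ball_subset_closedBall.trans hω)
  rcases htouch with htouch | htouch
  · exact h₁.not_hasConcaveTouch hωz htouch.of_comp_affineIsometry
  · have htouch₂ : HasConcaveTouch (r + 1) (u₂ ∘ ι) z := htouch.of_sub_affine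
    exact h₂.not_hasConcaveTouch hωz htouch₂.of_comp_affineIsometry

theorem realQConvexOn_add_general {E : Type*} [NormedAddCommGroup E] [InnerProductSpace ℝ E]
    {q r : ℕ} {u₁ u₂ : E → EReal} {ω : Set E} (h₁ : RealQConvexOn q u₁ ω)
    (h₂ : RealQConvexOn r u₂ ω) :
    RealQConvexOn (q + r) (fun x ↦ u₁ x + u₂ x) ω := by
  refine ⟨fun x hx ↦ EReal.add_ne_top (h₁.1 x hx) (h₂.1 x hx),
    h₁.2.1.add' h₂.2.1 fun x hx ↦ EReal.continuousAt_add (.inl (h₁.1 x hx)) (.inr (h₂.1 x hx)),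
    fun P hP c ρ hρ hball l hl y hy ↦ ?_⟩
  have : FiniteDimensional ℝ P.direction := .of_finrank_pos (by omega)
  let y₀ : P := ⟨y, hy.2⟩
  have : Nonempty P := ⟨y₀⟩
  let ι : P.direction →ᵃⁱ[ℝ] E :=
    P.subtypeₐᵢ.comp (AffineIsometryEquiv.vaddConst ℝ y₀).toAffineIsometry
  have hι : ι 0 = y := by simp [ι, y₀]
  rw [closure_ball c hρ.ne'] at hball
  have hιP (x) : ι x ∈ P := (x +ᵥ y₀).2
  rw [← hι] at hy ⊢
  exact h₁.add_comp_affineIsometry_le h₂ hP.ge ι hball l (fun x hx ↦ hl (ι x) ⟨hx, hιP x⟩) hy.1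

end Sum

/-- The sum of a real q-convex function and a real r-convex function on `ω ⊆ ℝⁿ`
is real (q+r)-convex on `ω`. -/
theorem realQConvexOn_add {n q r : ℕ}
    (ω : Set (EuclideanSpace ℝ (Fin n))) (hω : IsOpen ω)
    (u₁ u₂ : EuclideanSpace ℝ (Fin n) → EReal)
    (h₁ : RealQConvexOn q u₁ ω) (h₂ : RealQConvexOn r u₂ ω) :
    RealQConvexOn (q + r) (fun x => u₁ x + u₂ x) ω :=
  realQConvexOn_add_general h₁ h₂
end
end
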